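/- Let 𝔤 be a finite-dimensional complex simple Lie algebra of type F4 and let (e,h,f) be an sl2-triple in 𝔤 such that e is a distinguished nilpotent element with dim 𝔤^e = 12. Then the centre 𝔷(𝔤^e) of 𝔤^e has dimension 3, the eigenvalues of the restriction of ad h to 𝔷(𝔤^e) are 2 and 6 (the eigenvalue 6 occurring with multiplicity 2), and e satisfies property (P). -/

import Mathlib

open scoped ComplexOrder

/-- The centralizer `𝔤^e = {x ∈ 𝔤 : ⁅x, e⁆ = 0}` of an element `e`, as a Lie subalgebra. -/
def centralizer (L : Type*) [LieRing L] [LieAlgebra ℂ L] (e : L) : LieSubalgebra ℂ L where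
  carrier := {x : L | ⁅x, e⁆ = 0}
  add_mem' := fun {a b} ha hb => by
    simp only [Set.mem_setOf_eq] at *
    rw [add_lie, ha, hb, add_zero]
  zero_mem' := by simp
  smul_mem' := fun c a ha => by
    simp only [Set.mem_setOf_eq] at *
    rw [smul_lie, ha, smul_zero]
  lie_mem' := fun {a b} ha hb => by
    simp only [Set.mem_setOf_eq] at *
    simp [lie_lie, ha, hb]

/-- Membership in the centre `𝔷(𝔤^e)` of the centralizer of `e`:
`v` centralizes `e` and commutes with every element of `𝔤^e`. -/
def InCenterOfCentralizer (L : Type*) [LieRing L] [LieAlgebra ℂ L] (e v : L) : Prop :=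
  ⁅v, e⁆ = 0 ∧ ∀ y : L, ⁅y, e⁆ = 0 → ⁅v, y⁆ = 0

/-- The centre `𝔷(𝔤^e)` of the centralizer of `e`, as a subspace of `L`. -/
def zCenter (L : Type*) [LieRing L] [LieAlgebra ℂ L] (e : L) : Submodule ℂ L where
  carrier := {v : L | ⁅v, e⁆ = 0 ∧ ∀ y : L, ⁅y, e⁆ = 0 → ⁅v, y⁆ = 0}
  add_mem' := fun {a b} ha hb => ⟨by rw [add_lie, ha.1, hb.1, add_zero],
    fun y hy => by rw [add_lie, ha.2 y hy, hb.2 y hy, add_zero]⟩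
  zero_mem' := ⟨zero_lie e, fun y _ => zero_lie y⟩
  smul_mem' := fun c a ha => ⟨by rw [smul_lie, ha.1, smul_zero],
    fun y hy => by rw [smul_lie, ha.2 y hy, smul_zero]⟩

/-- Property (P) for an `sl₂`-triple `(e, h, f)`: for every nonzero `v ∈ 𝔷(𝔤^e)`, the
eigenspace `𝔷_max` of the restriction of `ad h` to `𝔷(𝔤^e)` for its largest eigenvalue is
contained in `[[f, 𝔤^e], v] = {⁅⁅f, x⁆, v⁆ : x ∈ 𝔤^e}`. -/
def PropertyP (L : Type*) [LieRing L] [LieAlgebra ℂ L] (e h f : L) : Prop :=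
  ∀ m : ℂ,
    (∃ z : L, z ≠ 0 ∧ InCenterOfCentralizer L e z ∧ ⁅h, z⁆ = m • z) →
    (∀ m' : ℂ, (∃ z : L, z ≠ 0 ∧ InCenterOfCentralizer L e z ∧ ⁅h, z⁆ = m' • z) → m' ≤ m) →
    ∀ v : L, InCenterOfCentralizer L e v → v ≠ 0 →
      ∀ z : L, InCenterOfCentralizer L e z → ⁅h, z⁆ = m • z →
        ∃ x : L, ⁅x, e⁆ = 0 ∧ ⁅⁅f, x⁆, v⁆ = z

/-- The stabilizer `{x ∈ 𝔮 : ξ(⁅x, y⁆) = 0 for all y ∈ 𝔮}` of a linear functional `ξ`. -/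
def coadStab (Q : Type*) [LieRing Q] [LieAlgebra ℂ Q] (ξ : Module.Dual ℂ Q) : Submodule ℂ Q where
  carrier := {x : Q | ∀ y : Q, ξ ⁅x, y⁆ = 0}
  add_mem' := fun {a b} ha hb y => by rw [add_lie, map_add, ha y, hb y, add_zero]
  zero_mem' := fun y => by rw [zero_lie, map_zero]
  smul_mem' := fun c a ha y => by rw [smul_lie, map_smul, ha y, smul_zero]

/-- The index of a complex Lie algebra:
`ind 𝔮 = min_{ξ ∈ 𝔮*} dim {x ∈ 𝔮 : ξ(⁅x, y⁆) = 0 for all y ∈ 𝔮}`. -/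
noncomputable def lieIndex (Q : Type*) [LieRing Q] [LieAlgebra ℂ Q] : ℕ :=
  ⨅ ξ : Module.Dual ℂ Q, Module.finrank ℂ ↥(coadStab Q ξ)

/-- A nilpotent element `e` is distinguished if the only `x ∈ 𝔤^e` such that `ad x` is a
semisimple endomorphism of `𝔤` is `x = 0`. -/
def IsDistinguished (L : Type*) [LieRing L] [LieAlgebra ℂ L] (e : L) : Prop :=
  ∀ x : L, ⁅x, e⁆ = 0 → (LieAlgebra.ad ℂ L x).IsSemisimple → x = 0

section
variable (L : Type*) [LieRing L] [LieAlgebra ℂ L] [FiniteDimensional ℂ L]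

/-- An auxiliary norm on a finite-dimensional complex Lie algebra. -/
@[reducible] noncomputable def lieNormedGroup : NormedAddCommGroup L :=
  NormedAddCommGroup.induced L (Fin (Module.finrank ℂ L) → ℂ)
    ((Module.finBasis ℂ L).equivFun : L →ₗ[ℂ] _) (Module.finBasis ℂ L).equivFun.injective

/-- The auxiliary norm is compatible with scalar multiplication. -/
@[reducible] noncomputable def lieNormedSpace :
    @NormedSpace ℂ L _ (lieNormedGroup L).toSeminormedAddCommGroup :=
  letI := lieNormedGroup L
  { norm_smul_le := fun a b => by
      change ‖(Module.finBasis ℂ L).equivFun (a • b)‖ ≤ ‖a‖ * ‖(Module.finBasis ℂ L).equivFun b‖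
      rw [map_smul, norm_smul] }

attribute [local instance] lieNormedGroup lieNormedSpace

variable {L}

noncomputable def adCLM (u : L) : L →L[ℂ] L :=
  LinearMap.toContinuousLinearMap (LieAlgebra.ad ℂ L u)

@[simp] lemma adCLM_apply (u x : L) : adCLM u x = ⁅u, x⁆ := rfl

lemma lieCompleteSpace : CompleteSpace L := FiniteDimensional.complete ℂ L

attribute [local instance] lieCompleteSpace

lemma exp_adCLM_apply_eigenvector (u v : L) (c : ℂ) (h : ⁅u, v⁆ = c • v) :
    NormedSpace.exp (adCLM u) v = Complex.exp c • v := by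
  have h1 : HasSum (fun n : ℕ => ((n.factorial : ℂ)⁻¹ • (adCLM u) ^ n) v)
      (NormedSpace.exp (adCLM u) v) :=
    (NormedSpace.exp_series_hasSum_exp' (𝕂 := ℂ) (adCLM u)).mapL
      (ContinuousLinearMap.apply ℂ L v)
  have h2 : HasSum (fun n : ℕ => ((n.factorial : ℂ)⁻¹ • c ^ n) • v) (Complex.exp c • v) := by
    rw [Complex.exp_eq_exp_ℂ]
    exact (NormedSpace.exp_series_hasSum_exp' (𝕂 := ℂ) c).smul_const v
  refine h1.unique ?_
  convert h2 using 2 with n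
  have : ((adCLM u) ^ n) v = c ^ n • v := by
    induction n with
    | zero => simp
    | succ n ih => rw [pow_succ', mul_apply_eq_comp, ih, map_smul, adCLM_apply, h, smul_smul,
        pow_succ]
  simp [this, smul_smul]

variable (L) in
/-- The Lie bracket as a continuous bilinear map. -/
noncomputable def lieCLM : L →L[ℂ] L →L[ℂ] L :=
  LinearMap.toContinuousLinearMap
    ((LinearMap.toContinuousLinearMap : (L →ₗ[ℂ] L) ≃ₗ[ℂ] (L →L[ℂ] L)).toLinearMap ∘ₗ
      (LieAlgebra.ad ℂ L : L →ₗ[ℂ] Module.End ℂ L))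

@[simp] lemma lieCLM_apply (u x : L) : lieCLM L u x = ⁅u, x⁆ := rfl

lemma exp_neg_apply_exp_apply (D : L →L[ℂ] L) (x : L) :
    NormedSpace.exp (-D) (NormedSpace.exp D x) = x := by
  let : NormedAlgebra ℚ (L →L[ℂ] L) := NormedAlgebra.restrictScalars ℚ ℂ _
  rw [← mul_apply_eq_comp, ← NormedSpace.exp_add_of_commute (Commute.neg_left (Commute.refl D)),
    neg_add_cancel, NormedSpace.exp_zero]
  rfl

lemma exp_apply_exp_neg_apply (D : L →L[ℂ] L) (x : L) :
    NormedSpace.exp D (NormedSpace.exp (-D) x) = x := by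
  simpa using exp_neg_apply_exp_apply (-D) x

lemma exp_adCLM_lie (u a b : L) :
    NormedSpace.exp (adCLM u) ⁅a, b⁆ =
      ⁅NormedSpace.exp (adCLM u) a, NormedSpace.exp (adCLM u) b⁆ := by
  set D := adCLM u with hD
  have hΦ : ∀ (E : L →L[ℂ] L) (t : ℂ), HasDerivAt (fun t : ℂ => NormedSpace.exp (t • E))
      (E * NormedSpace.exp (t • E)) t := fun E t => hasDerivAt_exp_smul_const' E t
  have hv : ∀ (c : L) (t : ℂ), HasDerivAt (fun t : ℂ => NormedSpace.exp (t • D) c)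
      (D (NormedSpace.exp (t • D) c)) t := fun c t => by
    simpa using (hΦ D t).clm_apply (hasDerivAt_const t c)
  have hb : ∀ t : ℂ, HasDerivAt
      (fun t : ℂ => ⁅NormedSpace.exp (t • D) a, NormedSpace.exp (t • D) b⁆)
      (D ⁅NormedSpace.exp (t • D) a, NormedSpace.exp (t • D) b⁆) t := fun t => by
    have h1 := ((lieCLM L).hasFDerivAt.comp_hasDerivAt t (hv a t)).clm_apply (hv b t)
    refine h1.congr_deriv ?_
    simp [hD, lie_lie]
  have hg : ∀ t : ℂ, HasDerivAt (fun t : ℂ => NormedSpace.exp (t • (-D))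
      ⁅NormedSpace.exp (t • D) a, NormedSpace.exp (t • D) b⁆) 0 t := fun t => by
    have h1 := (hasDerivAt_exp_smul_const (𝕂 := ℂ) (-D) t).clm_apply (hb t)
    refine h1.congr_deriv ?_
    simp
  have hc := is_const_of_deriv_eq_zero (fun t => (hg t).differentiableAt)
    (fun t => (hg t).deriv) 1 0
  simp only [one_smul, zero_smul, NormedSpace.exp_zero, one_apply_eq_self] at hc
  rw [← hc, exp_apply_exp_neg_apply]

/-- The inner automorphism `exp (ad u)`. -/
noncomputable def expAut (u : L) : L ≃ₗ⁅ℂ⁆ L :=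
  { (NormedSpace.exp (adCLM u) : L →L[ℂ] L).toLinearMap with
    invFun := (NormedSpace.exp (-adCLM u) : L →L[ℂ] L)
    left_inv := exp_neg_apply_exp_apply _
    right_inv := exp_apply_exp_neg_apply _
    map_lie' := exp_adCLM_lie u _ _ }

lemma expAut_apply (u x : L) : expAut u x = NormedSpace.exp (adCLM u) x := rfl

lemma expAut_apply_eigenvector {u v : L} {c : ℂ} (h : ⁅u, v⁆ = c • v) :
    expAut u v = Complex.exp c • v := exp_adCLM_apply_eigenvector u v c h

lemma expAut_mem (T : Submodule ℂ L) {u : L} (hu : ∀ x ∈ T, ⁅u, x⁆ ∈ T) {x : L} (hx : x ∈ T) :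
    expAut u x ∈ T := by
  have hp : ∀ n : ℕ, (adCLM u ^ n) x ∈ T := fun n => by
    induction n with
    | zero => exact hx
    | succ n ih => rw [pow_succ']; exact hu _ ih
  have h1 : HasSum (fun n : ℕ => ((n.factorial : ℂ)⁻¹ • (adCLM u) ^ n) x)
      (NormedSpace.exp (adCLM u) x) :=
    (NormedSpace.exp_series_hasSum_exp' (𝕂 := ℂ) (adCLM u)).mapL
      (ContinuousLinearMap.apply ℂ L x)
  refine T.closed_of_finiteDimensional.mem_of_tendsto h1 (Filter.Eventually.of_forall fun s => ?_)
  refine T.sum_mem fun n _ => T.smul_mem _ ?_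
  exact hp n

end

section
open Filter Topology
variable {L : Type*} [LieRing L] [LieAlgebra ℂ L] [FiniteDimensional ℂ L]
attribute [local instance] lieNormedGroup lieNormedSpace lieCompleteSpace

lemma eventually_exists_expAut_eq (U Y T : Submodule ℂ L) (hY : Y ≤ T)
    (hU : ∀ u ∈ U, ∀ t ∈ T, ⁅u, t⁆ ∈ T) {x d : L} (hx : x ∈ T) (hd : d ∈ T)
    (h : ∀ t ∈ T, ∃ u ∈ U, ∃ y ∈ Y, ⁅u, x⁆ + y = t) :
    ∀ᶠ r in 𝓝 (0 : ℂ), ∃ u ∈ U, ∃ y ∈ Y, expAut u (x + y) = x + r • d := by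
  obtain ⟨p, hp⟩ := LinearMap.exists_leftInverse_of_injective T.subtype (by simp)
  let π : L →L[ℂ] T := LinearMap.toContinuousLinearMap p
  have hπ : ∀ t : T, π t = t := fun t => LinearMap.congr_fun hp t
  let G : U × Y → L := fun q => NormedSpace.exp (adCLM (q.1 : L)) (x + q.2)
  let A : (U × Y) →L[ℂ] (L →L[ℂ] L) :=
    (lieCLM L).comp (U.subtypeL.comp (ContinuousLinearMap.fst ℂ U Y))
  let B : (U × Y) →L[ℂ] L := Y.subtypeL.comp (ContinuousLinearMap.snd ℂ U Y)
  have hA : HasStrictFDerivAt (fun q : U × Y => NormedSpace.exp (A q)) A 0 := by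
    have h0 : HasStrictFDerivAt (NormedSpace.exp : (L →L[ℂ] L) → (L →L[ℂ] L))
        (1 : (L →L[ℂ] L) →L[ℂ] (L →L[ℂ] L)) (A 0) := by
      rw [map_zero]; exact hasStrictFDerivAt_exp_zero
    exact h0.comp 0 A.hasStrictFDerivAt
  have hB : HasStrictFDerivAt (fun q : U × Y => x + B q) B 0 :=
    B.hasStrictFDerivAt.const_add x
  have hG := π.hasStrictFDerivAt.comp (0 : U × Y) (hA.clm_apply hB)
  have hsurj := hG.map_nhds_eq_of_surj (by
    rw [LinearMap.range_eq_top]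
    intro t
    obtain ⟨u, hu, y, hy, huy⟩ := h t t.2
    refine ⟨(⟨u, hu⟩, ⟨y, hy⟩), ?_⟩
    have : A (⟨u, hu⟩, ⟨y, hy⟩) = adCLM u := rfl
    have h2 : B (⟨u, hu⟩, ⟨y, hy⟩) = y := rfl
    rw [← hπ t, ← huy]
    simp [this, h2, NormedSpace.exp_zero, add_comm])
  have h1 : ∀ᶠ w in 𝓝 (π x), ∃ q : U × Y, π (G q) = w := by
    have h3 : Set.range (fun q : U × Y => π (G q)) ∈
        map (fun q : U × Y => π (G q)) (𝓝 0) := range_mem_map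
    have h4 : π (NormedSpace.exp (A 0) (x + B 0)) = π x := by simp [NormedSpace.exp_zero]
    change map _ _ = 𝓝 (π (NormedSpace.exp (A 0) (x + B 0))) at hsurj
    rw [h4] at hsurj
    rw [← hsurj]
    exact h3
  have ht : Tendsto (fun r : ℂ => π (x + r • d)) (𝓝 0) (𝓝 (π x)) := by
    have : Continuous (fun r : ℂ => π (x + r • d)) := by fun_prop
    simpa using this.tendsto 0
  filter_upwards [ht.eventually h1] with r ⟨q, hq⟩
  refine ⟨q.1, q.1.2, q.2, q.2.2, ?_⟩
  have m1 : G q ∈ T := expAut_mem T (hU _ q.1.2) (T.add_mem hx (hY q.2.2))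
  have m2 : x + r • d ∈ T := T.add_mem hx (T.smul_mem _ hd)
  rw [show G q = ((⟨G q, m1⟩ : T) : L) from rfl,
    show x + r • d = ((⟨x + r • d, m2⟩ : T) : L) from rfl, hπ, hπ] at hq
  exact congrArg Subtype.val hq

lemma Set.Countable.rel_of_eventually_compl {S : Set ℂ} (hS : S.Countable) (P : ℂ → ℂ → Prop)
    (h : ∀ x ∈ Sᶜ, ∀ᶠ y in 𝓝 x, y ∈ Sᶜ → P x y)
    (htrans : ∀ x y z, P x y → P y z → P x z) (hsymm : ∀ x y, P x y → P y x)
    {x y : ℂ} (hx : x ∈ Sᶜ) (hy : y ∈ Sᶜ) : P x y := by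
  have hc := hS.isConnected_compl_of_one_lt_rank (E := ℂ)
    (by rw [Complex.rank_real_complex]; exact_mod_cast one_lt_two)
  refine hc.isPreconnected.induction₂ P (fun x hx => ?_) (fun x y z _ _ _ => htrans x y z)
    (fun x y _ _ => hsymm x y) hx hy
  rw [eventually_nhdsWithin_iff]
  exact h x hx

end

section
open Filter Topology
variable {L : Type*} [LieRing L] [LieAlgebra ℂ L]

/-- The eigenspace of `ad s` for the eigenvalue `c`. -/
def adEig (s : L) (c : ℂ) : Submodule ℂ L := Module.End.eigenspace (LieAlgebra.ad ℂ L s) c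

lemma mem_adEig {s x : L} {c : ℂ} : x ∈ adEig s c ↔ ⁅s, x⁆ = c • x := by
  simp [adEig]

lemma lie_mem_adEig {s x y : L} {a b c : ℂ} (hx : x ∈ adEig s a) (hy : y ∈ adEig s b)
    (h : a + b = c) : ⁅x, y⁆ ∈ adEig s c := by
  rw [mem_adEig] at *
  rw [leibniz_lie, hx, hy, ← h, add_smul, smul_lie, lie_smul]

variable [FiniteDimensional ℂ L]

lemma expAut_apply_of_lie_eq_zero {u v : L} (h : ⁅u, v⁆ = 0) : expAut u v = v := by
  have := expAut_apply_eigenvector (u := u) (v := v) (c := 0) (by simp [h])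
  simpa using this

lemma countable_not_surjective_add_smul {V W : Type*} [AddCommGroup V] [Module ℂ V]
    [AddCommGroup W] [Module ℂ W] [FiniteDimensional ℂ W] (A B : V →ₗ[ℂ] W)
    (hA : Function.Surjective A) : {t : ℂ | ¬ Function.Surjective (A + t • B)}.Countable := by
  obtain ⟨R, hR⟩ := LinearMap.exists_rightInverse_of_surjective A (LinearMap.range_eq_top.2 hA)
  let X : Module.End ℂ W := B ∘ₗ R
  refine ((Module.End.finite_spectrum X).image (fun z => -z⁻¹)).countable.mono fun t ht => ?_
  rw [Set.mem_ofPred_eq] at ht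
  have ht0 : t ≠ 0 := by
    rintro rfl
    exact ht (by simpa using hA)
  refine ⟨-t⁻¹, ?_, by simp⟩
  rw [spectrum.mem_iff]
  intro hu
  apply ht
  have hu2 : Function.Surjective ((algebraMap ℂ (Module.End ℂ W)) (-t⁻¹) - X) :=
    ((Module.End.isUnit_iff _).1 hu).2
  intro w
  obtain ⟨z, hz⟩ := hu2 (-(t⁻¹ • w))
  refine ⟨R z, ?_⟩
  have h1 : A (R z) = z := LinearMap.congr_fun hR z
  have h2 : (-t⁻¹) • z - B (R z) = -(t⁻¹ • w) := by simpa [X, sub_eq_add_neg] using hz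
  have h3 : B (R z) = t⁻¹ • w - t⁻¹ • z := by
    rw [eq_sub_iff_add_eq, ← neg_inj, ← h2]; simp [sub_eq_add_neg, add_comm]
  simp [h1, h3, smul_sub, smul_smul, mul_inv_cancel₀ ht0]

lemma exists_aut_of_open_orbits {s e₁ e₂ : L} {c : ℂ} (he₁ : e₁ ∈ adEig s c)
    (he₂ : e₂ ∈ adEig s c) (h₁ : ∀ t ∈ adEig s c, ∃ u ∈ adEig s 0, ⁅u, e₁⁆ = t)
    (h₂ : ∀ t ∈ adEig s c, ∃ u ∈ adEig s 0, ⁅u, e₂⁆ = t) :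
    ∃ φ : L ≃ₗ⁅ℂ⁆ L, φ s = s ∧ φ e₁ = e₂ := by
  let E : ℂ → L := fun t => e₁ + t • (e₂ - e₁)
  have hE : ∀ t, E t ∈ adEig s c := fun t =>
    Submodule.add_mem _ he₁ (Submodule.smul_mem _ _ (Submodule.sub_mem _ he₂ he₁))
  let A : L → (adEig s 0 →ₗ[ℂ] L) := fun x =>
    (-(LieAlgebra.ad ℂ L x : Module.End ℂ L)) ∘ₗ (adEig s 0).subtype
  have hA : ∀ x ∈ adEig s c, ∀ u, A x u ∈ adEig s c := fun x hx u => by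
    have : A x u = ⁅(u : L), x⁆ := by simp [A]
    rw [this]
    exact lie_mem_adEig u.2 hx (by simp)
  let A₁ := (A e₁).codRestrict (adEig s c) (hA _ he₁)
  let A₂ := (A (e₂ - e₁)).codRestrict (adEig s c) (hA _ (Submodule.sub_mem _ he₂ he₁))
  have hA12 : ∀ (t : ℂ) u, ((A₁ + t • A₂) u : L) = ⁅(u : L), E t⁆ := fun t u => by
    simp only [lie_add, lie_smul, lie_sub, E]
    simp only [A₁, A₂, A, LinearMap.add_apply, LinearMap.smul_apply, LinearMap.neg_apply,
      LinearMap.codRestrict_apply, LinearMap.comp_apply, Submodule.coe_add, Submodule.coe_smul,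
      Submodule.subtype_apply, LieAlgebra.ad_apply, sub_lie]
    rw [← lie_skew e₁ (u : L), ← lie_skew e₂ (u : L)]
    module
  have hsurj : ∀ t : ℂ, Function.Surjective (A₁ + t • A₂) ↔
      ∀ y ∈ adEig s c, ∃ u ∈ adEig s 0, ⁅u, E t⁆ = y := fun t => by
    constructor
    · intro h y hy
      obtain ⟨u, hu⟩ := h ⟨y, hy⟩
      exact ⟨u, u.2, by rw [← hA12, hu]⟩
    · rintro h ⟨y, hy⟩
      obtain ⟨u, hu, huy⟩ := h y hy
      exact ⟨⟨u, hu⟩, Subtype.ext (by rw [hA12]; exact huy)⟩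
  have h10 : Function.Surjective (A₁ + (0 : ℂ) • A₂) := (hsurj 0).2 (by simpa [E] using h₁)
  have h11 : Function.Surjective (A₁ + (1 : ℂ) • A₂) := (hsurj 1).2 (by simpa [E] using h₂)
  have hcount := countable_not_surjective_add_smul A₁ A₂ (by simpa using h10)
  have key := hcount.rel_of_eventually_compl
    (fun a b => ∃ φ : L ≃ₗ⁅ℂ⁆ L, φ s = s ∧ φ (E a) = E b) (fun a ha => ?_)
    (fun a b c ⟨φ, h1, h2⟩ ⟨ψ, h3, h4⟩ => ⟨φ.trans ψ, by simp [h1, h3], by simp [h2, h4]⟩)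
    (fun a b ⟨φ, h1, h2⟩ => ⟨φ.symm, by rw [LieEquiv.symm_apply_eq]; exact h1.symm, by
      rw [LieEquiv.symm_apply_eq]; exact h2.symm⟩)
    (x := 0) (y := 1) (by simpa using h10) (by simpa using h11)
  · simpa [E] using key
  · have ha' := (hsurj a).1 (by simpa using ha)
    have := eventually_exists_expAut_eq (adEig s 0) ⊥ (adEig s c) bot_le
      (fun u hu t ht => lie_mem_adEig hu ht (by simp)) (hE a) (Submodule.sub_mem _ he₂ he₁)
      (fun t ht => by
        obtain ⟨u, hu, h⟩ := ha' t ht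
        exact ⟨u, hu, 0, Submodule.zero_mem _, by simpa using h⟩)
    have ht : Tendsto (fun b : ℂ => b - a) (𝓝 a) (𝓝 0) := by
      have : Continuous (fun b : ℂ => b - a) := by fun_prop
      simpa using this.tendsto a
    filter_upwards [ht.eventually this] with b ⟨u, hu, y, hy, h⟩ _
    rw [Submodule.mem_bot] at hy
    refine ⟨expAut u, expAut_apply_of_lie_eq_zero ?_, ?_⟩
    · rw [mem_adEig, zero_smul] at hu
      rw [← lie_skew, hu, neg_zero]
    · rw [hy, add_zero] at h
      rw [h]
      simp only [E, add_assoc, ← add_smul]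
      simp
end

section
open Filter Topology
open LieAlgebra LieSubalgebra Module
variable {L : Type*} [LieRing L] [LieAlgebra ℂ L]

lemma mem_engel_map (φ : L ≃ₗ⁅ℂ⁆ L) (x z : L) : φ z ∈ engel ℂ (φ x) ↔ z ∈ engel ℂ x := by
  have h : ∀ n, ((LieAlgebra.ad ℂ L (φ x)) ^ n) (φ z) = φ (((LieAlgebra.ad ℂ L x) ^ n) z) := by
    intro n
    induction n with
    | zero => rfl
    | succ n ih =>
      rw [pow_succ', pow_succ', Module.End.mul_apply, Module.End.mul_apply, ih]
      exact (LieEquiv.map_lie φ _ _).symm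
  simp only [mem_engel_iff, h]
  simp

variable [FiniteDimensional ℂ L]

lemma LieAlgebra.IsRegular.isCartanSubalgebra_engel {x : L} (hx : LieAlgebra.IsRegular ℂ x) :
    (engel ℂ x).IsCartanSubalgebra := by
  have h : (finrank ℂ L : Cardinal) ≤ Cardinal.mk ℂ :=
    Cardinal.natCast_le_aleph0.trans (Cardinal.infinite_iff.mp inferInstance)
  refine ⟨?_, normalizer_engel _ _⟩
  apply isNilpotent_of_forall_le_engel
  intro y hy
  set Ex : {engel ℂ z | z ∈ engel ℂ x} := ⟨engel ℂ x, x, self_mem_engel _ _, rfl⟩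
  suffices IsBot Ex from @this ⟨engel ℂ y, y, hy, rfl⟩
  apply engel_isBot_of_isMin h (engel ℂ x) Ex le_rfl
  rintro ⟨_, y, hy, rfl⟩ hyx
  suffices finrank ℂ (engel ℂ x) ≤ finrank ℂ (engel ℂ y) by
    suffices engel ℂ y = engel ℂ x from this.ge
    apply LieSubalgebra.toSubmodule_injective
    exact Submodule.eq_of_le_of_finrank_le hyx this
  rw [(isRegular_iff_finrank_engel_eq_rank ℂ x).mp hx]
  apply rank_le_finrank_engel

lemma countable_not_isCartanSubalgebra_engel (x d : L) (h : LieAlgebra.IsRegular ℂ (x + d)) :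
    {t : ℂ | ¬ (engel ℂ (x + t • d)).IsCartanSubalgebra}.Countable := by
  classical
  let b := Module.finBasis ℂ L
  obtain ⟨p, hp⟩ : ∃ p : MvPolynomial (Fin (finrank ℂ L)) ℂ, ∀ y : L,
      LieAlgebra.IsRegular ℂ y ↔ MvPolynomial.eval (b.repr y) p ≠ 0 :=
    ⟨_, fun y => isRegular_iff_coeff_polyCharpoly_rank_ne_zero ℂ b y⟩
  let q : Polynomial ℂ := MvPolynomial.aeval
    (fun i => Polynomial.C (b.repr x i) + Polynomial.X * Polynomial.C (b.repr d i)) p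
  have hq : ∀ t : ℂ, q.eval t = MvPolynomial.eval (b.repr (x + t • d)) p := fun t => by
    have := MvPolynomial.map_aeval
      (fun i => Polynomial.C (b.repr x i) + Polynomial.X * Polynomial.C (b.repr d i))
      (Polynomial.evalRingHom t) p
    rw [Polynomial.coe_evalRingHom] at this
    rw [this, MvPolynomial.eval, MvPolynomial.coe_eval₂Hom]
    congr 1
    · ext; simp
    · ext i
      simp
      ring
  have hq0 : q ≠ 0 := by
    intro h0
    refine (hp (x + d)).1 h ?_
    have := hq 1
    rw [h0, one_smul, Polynomial.eval_zero] at this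
    exact this.symm
  refine (q.roots.toFinset.countable_toSet).mono fun t ht => ?_
  simp only [Finset.mem_coe, Multiset.mem_toFinset, Polynomial.mem_roots hq0]
  by_contra hne
  refine ht (LieAlgebra.IsRegular.isCartanSubalgebra_engel ?_)
  rw [hp]
  rw [Polynomial.IsRoot, hq] at hne
  exact hne

lemma exists_lie_add_mem_engel (x t : L) : ∃ u : L, ∃ y ∈ engel ℂ x, ⁅u, x⁆ + y = t := by
  have h := LinearMap.isCompl_iSup_ker_pow_iInf_range_pow (LieAlgebra.ad ℂ L x)
  have ht : t ∈ (⨆ n, ((LieAlgebra.ad ℂ L x) ^ n).ker) ⊔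
      ⨅ n, ((LieAlgebra.ad ℂ L x) ^ n).range := by
    rw [h.sup_eq_top]; trivial
  obtain ⟨y, hy, z, hz, rfl⟩ := Submodule.mem_sup.1 ht
  obtain ⟨u, hu⟩ := (Submodule.mem_iInf _).1 hz 1
  refine ⟨-u, y, ?_, ?_⟩
  · have : (⨆ n, ((LieAlgebra.ad ℂ L x) ^ n).ker) ≤ (engel ℂ x).toSubmodule :=
      iSup_le fun n w hw => (mem_engel_iff ℂ x w).2 ⟨n, hw⟩
    exact this hy
  · rw [← hu]
    simp [add_comm]

lemma lie_eq_zero_of_mem_isCartanSubalgebra [LieAlgebra.IsKilling ℂ L] {H : LieSubalgebra ℂ L}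
    (hH : H.IsCartanSubalgebra) {x y : L} (hx : x ∈ H) (hy : y ∈ H) : ⁅x, y⁆ = 0 := by
  have := LieAlgebra.IsKilling.instIsLieAbelianOfIsCartanSubalgebra ℂ L H
  exact congrArg Subtype.val (this.trivial (⟨x, hx⟩ : H) ⟨y, hy⟩)

lemma exists_aut_engel_of_isRegular [LieAlgebra.IsKilling ℂ L] {x z : L}
    (hx : (engel ℂ x).IsCartanSubalgebra) (hz : LieAlgebra.IsRegular ℂ z) :
    ∃ φ : L ≃ₗ⁅ℂ⁆ L, ∀ w, w ∈ engel ℂ x ↔ φ w ∈ engel ℂ z := by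
  let d := z - x
  have hS := countable_not_isCartanSubalgebra_engel x d (by simpa [d] using hz)
  have key := hS.rel_of_eventually_compl
    (fun a b => ∃ φ : L ≃ₗ⁅ℂ⁆ L, ∀ w, w ∈ engel ℂ (x + a • d) ↔ φ w ∈ engel ℂ (x + b • d))
    (fun a ha => ?_)
    (fun a b c ⟨φ, h1⟩ ⟨ψ, h3⟩ => ⟨φ.trans ψ, fun w => (h1 w).trans (h3 _)⟩)
    (fun a b ⟨φ, h1⟩ => ⟨φ.symm, fun w => by simp [h1]⟩)
    (x := 0) (y := 1) (by simpa using hx)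
    (by simpa [d] using LieAlgebra.IsRegular.isCartanSubalgebra_engel hz)
  · simpa [d] using key
  · have ha' : (engel ℂ (x + a • d)).IsCartanSubalgebra := by simpa using ha
    have := eventually_exists_expAut_eq ⊤ (engel ℂ (x + a • d)).toSubmodule ⊤ le_top
      (fun u hu t ht => Submodule.mem_top) (x := x + a • d) (d := d)
      Submodule.mem_top Submodule.mem_top
      (fun t ht => by
        obtain ⟨u, y, hy, h⟩ := exists_lie_add_mem_engel (x + a • d) t
        exact ⟨u, Submodule.mem_top, y, hy, h⟩)
    have ht : Tendsto (fun b : ℂ => b - a) (𝓝 a) (𝓝 0) := by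
      have : Continuous (fun b : ℂ => b - a) := by fun_prop
      simpa using this.tendsto a
    filter_upwards [ht.eventually this] with b ⟨u, _, y, hy, h⟩ hb
    have hb' : (engel ℂ (x + b • d)).IsCartanSubalgebra := by simpa using hb
    have hxb : expAut u (x + a • d + y) = x + b • d := by rw [h]; module
    have hmem : x + a • d + y ∈ engel ℂ (x + a • d) :=
      add_mem (self_mem_engel _ _) hy
    have hle : ∀ w ∈ engel ℂ (x + a • d), expAut u w ∈ engel ℂ (x + b • d) := fun w hw => by
      rw [← hxb, mem_engel_map, mem_engel_iff]
      exact ⟨1, by simpa using lie_eq_zero_of_mem_isCartanSubalgebra ha' hmem hw⟩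
    refine ⟨expAut u, fun w => ⟨hle w, fun hw => ?_⟩⟩
    rw [← ha'.self_normalizing, mem_normalizer_iff]
    intro v hv
    have : ⁅w, v⁆ = 0 := by
      apply (expAut u).injective
      refine (LieEquiv.map_lie _ w v).trans (Eq.trans ?_ (map_zero _).symm)
      exact lie_eq_zero_of_mem_isCartanSubalgebra hb' hw (hle v hv)
    rw [this]
    exact zero_mem _

/-- Cartan subalgebras of Engel form in a Killing Lie algebra over `ℂ` are conjugate. -/
theorem exists_aut_engel [LieAlgebra.IsKilling ℂ L] {x y : L}
    (hx : (engel ℂ x).IsCartanSubalgebra) (hy : (engel ℂ y).IsCartanSubalgebra) :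
    ∃ φ : L ≃ₗ⁅ℂ⁆ L, ∀ w, w ∈ engel ℂ x ↔ φ w ∈ engel ℂ y := by
  obtain ⟨z, hz⟩ := LieAlgebra.exists_isRegular ℂ L
  obtain ⟨φ, hφ⟩ := exists_aut_engel_of_isRegular hx hz
  obtain ⟨ψ, hψ⟩ := exists_aut_engel_of_isRegular hy hz
  exact ⟨φ.trans ψ.symm, fun w => by rw [hφ, hψ]; simp⟩
end

section
open LieAlgebra LieSubalgebra Module
variable {L : Type*} [LieRing L] [LieAlgebra ℂ L] [FiniteDimensional ℂ L]

/-- The additive Jordan decomposition in a Killing Lie algebra. -/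
lemma exists_jordan_decomposition [LieAlgebra.IsKilling ℂ L] (h : L) :
    ∃ s n : L, h = s + n ∧ (LieAlgebra.ad ℂ L s).IsSemisimple ∧ IsNilpotent (LieAlgebra.ad ℂ L n) ∧
      ⁅s, n⁆ = 0 ∧ ∀ (x : L) (c : ℂ), ⁅h, x⁆ = c • x → ⁅s, x⁆ = c • x := by
  obtain ⟨N, hN, S, hS, hNn, hSs, hNS⟩ :=
    (LieAlgebra.ad ℂ L h).exists_isNilpotent_isSemisimple
  have hcomm : Commute (LieAlgebra.ad ℂ L h) S :=
    Algebra.commute_of_mem_adjoin_self hS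
  have hSx : ∀ (c : ℂ), ∀ x ∈ Module.End.maxGenEigenspace (LieAlgebra.ad ℂ L h) c,
      S x = c • x := fun c x hx =>
    Module.End.apply_eq_of_mem_of_comm_of_isFinitelySemisimple_of_isNil hx hcomm
      hSs.isFinitelySemisimple (by rw [hNS]; simpa using hNn)
  have htop := Module.End.iSup_maxGenEigenspace_eq_top (LieAlgebra.ad ℂ L h)
  have hleib : ∀ x y, S ⁅x, y⁆ = ⁅S x, y⁆ + ⁅x, S y⁆ := by
    intro x y
    have hx : x ∈ ⨆ c, Module.End.maxGenEigenspace (LieAlgebra.ad ℂ L h) c := by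
      rw [htop]; trivial
    have hy : y ∈ ⨆ c, Module.End.maxGenEigenspace (LieAlgebra.ad ℂ L h) c := by
      rw [htop]; trivial
    induction hx using Submodule.iSup_induction' with
    | zero => simp
    | add x₁ x₂ _ _ h1 h2 => simp only [add_lie, map_add, h1, h2]; abel
    | mem a x hx =>
      induction hy using Submodule.iSup_induction' with
      | zero => simp
      | add y₁ y₂ _ _ h1 h2 => simp only [lie_add, map_add, h1, h2]; abel
      | mem b y hy =>
        have := LieModule.lie_mem_maxGenEigenspace_toEnd (R := ℂ) (L := L) (M := L)
          (x := h) hx hy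
        rw [hSx _ _ hx, hSx _ _ hy, hSx _ _ this, add_smul, smul_lie, lie_smul]
  let D : LieDerivation ℂ L L := ⟨S, fun a b => by
    rw [hleib, ← lie_skew b, sub_neg_eq_add, add_comm]⟩
  obtain ⟨s, hs⟩ := LieDerivation.IsKilling.exists_eq_ad D
  have hsS : LieAlgebra.ad ℂ L s = S := by
    ext x
    have := congrArg (fun D : LieDerivation ℂ L L => D x) hs
    simpa [D] using this
  refine ⟨s, h - s, by abel, hsS ▸ hSs, ?_, ?_, fun x c hx => ?_⟩
  · rw [map_sub, hsS, hNS]; simpa using hNn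
  · have : S h = (0 : ℂ) • h := hSx 0 h (by
      rw [Module.End.mem_maxGenEigenspace]; exact ⟨1, by simp⟩)
    rw [lie_sub, lie_self, sub_zero, ← LieAlgebra.ad_apply (R := ℂ), hsS, this, zero_smul]
  · rw [← LieAlgebra.ad_apply (R := ℂ), hsS]
    refine hSx c x ?_
    rw [Module.End.mem_maxGenEigenspace]
    exact ⟨1, by simp [hx]⟩

lemma exists_common_eigenvector (W : Submodule ℂ L) (hW : W ≠ ⊥) (x : L)
    (hx : ∀ w ∈ W, ⁅x, w⁆ ∈ W) : ∃ w ∈ W, w ≠ 0 ∧ ∃ c : ℂ, ⁅x, w⁆ = c • w := by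
  have : Nontrivial W := Submodule.nontrivial_iff_ne_bot.2 hW
  obtain ⟨c, hc⟩ := Module.End.exists_eigenvalue ((LieAlgebra.ad ℂ L x).restrict hx)
  obtain ⟨w, hw⟩ := hc.exists_hasEigenvector
  refine ⟨w, w.2, fun h => hw.2 (Subtype.ext h), c, ?_⟩
  exact congrArg Subtype.val hw.apply_eq_smul

omit [FiniteDimensional ℂ L] in
lemma lie_eq_zero_of_mem_engel {s : L} (hs : (LieAlgebra.ad ℂ L s).IsSemisimple) {z : L}
    (hz : z ∈ engel ℂ s) : ⁅s, z⁆ = 0 := by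
  have : z ∈ Module.End.maxGenEigenspace (LieAlgebra.ad ℂ L s) 0 := hz
  rw [hs.isFinitelySemisimple.maxGenEigenspace_eq_eigenspace] at this
  simpa using this

lemma exists_forall_mem_engel_add_smul {s : L} (hs : (LieAlgebra.ad ℂ L s).IsSemisimple) {x : L}
    (hsx : ⁅s, x⁆ = 0) : ∃ t : ℂ, ∀ z ∈ engel ℂ (x + t • s), ⁅s, z⁆ = 0 := by
  have hxs' : ⁅x, s⁆ = 0 := by rw [← lie_skew, hsx, neg_zero]
  have hfin : ((fun q : ℂ × ℂ => -q.1 / q.2) '' (spectrum ℂ (LieAlgebra.ad ℂ L x) ×ˢ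
      spectrum ℂ (LieAlgebra.ad ℂ L s))).Finite :=
    ((Module.End.finite_spectrum _).prod (Module.End.finite_spectrum _)).image _
  obtain ⟨t, ht⟩ := hfin.exists_notMem
  have hsy : ⁅x + t • s, s⁆ = 0 := by simp [hxs']
  have hsE : s ∈ engel ℂ (x + t • s) := (mem_engel_iff ℂ _ _).2 ⟨1, by simpa using hxs'⟩
  have hinv : ∀ w ∈ (engel ℂ (x + t • s)).toSubmodule,
      LieAlgebra.ad ℂ L s w ∈ (engel ℂ (x + t • s)).toSubmodule := fun w hw =>
    (engel ℂ (x + t • s)).lie_mem hsE hw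
  refine ⟨t, ?_⟩
  · have h0 : (LieAlgebra.ad ℂ L s).restrict hinv = 0 := by
      rw [(hs.restrict (p := (engel ℂ (x + t • s)).toSubmodule)
        (hp := hinv)).eq_zero_iff_forall_eigenvalue]
      intro a ha
      by_contra ha0
      obtain ⟨w₀, hw₀⟩ := ha.exists_hasEigenvector
      have hw₀' : ⁅s, (w₀ : L)⁆ = a • (w₀ : L) := congrArg Subtype.val hw₀.apply_eq_smul
      let W : Submodule ℂ L := (engel ℂ (x + t • s)).toSubmodule ⊓ adEig s a
      have hW : W ≠ ⊥ := by
        intro hbot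
        have : (w₀ : L) ∈ W := ⟨w₀.2, mem_adEig.2 hw₀'⟩
        rw [hbot, Submodule.mem_bot] at this
        exact hw₀.2 (Subtype.ext this)
      obtain ⟨w, hw, hw0, c, hc⟩ := exists_common_eigenvector W hW (x + t • s) (fun w hw =>
        ⟨(engel ℂ (x + t • s)).lie_mem (self_mem_engel ℂ _) hw.1,
          lie_mem_adEig (a := 0) (mem_adEig.2 (by simp [hsx])) hw.2 (by simp)⟩)
      have hc0 : c = 0 := by
        obtain ⟨k, hk⟩ := (mem_engel_iff ℂ _ _).1 hw.1
        have : ∀ k : ℕ, ((LieAlgebra.ad ℂ L (x + t • s)) ^ k) w = c ^ k • w := fun k => by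
          induction k with
          | zero => simp
          | succ k ih => rw [pow_succ', Module.End.mul_apply, ih, map_smul, LieAlgebra.ad_apply, hc,
              smul_smul, pow_succ]
        rw [this, smul_eq_zero] at hk
        exact eq_zero_of_pow_eq_zero (hk.resolve_right hw0)
      have hsw : ⁅s, w⁆ = a • w := mem_adEig.1 hw.2
      have hxw : ⁅x, w⁆ = (-(t * a)) • w := by
        rw [hc0, add_lie, smul_lie, hsw, zero_smul] at hc
        rw [eq_neg_of_add_eq_zero_left hc, smul_smul, neg_smul]
      refine ht ⟨(-(t * a), a), ⟨?_, ?_⟩, ?_⟩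
      · exact Module.End.HasEigenvalue.mem_spectrum
          (Module.End.hasEigenvalue_of_hasEigenvector
            ⟨Module.End.mem_eigenspace_iff.2 hxw, hw0⟩)
      · exact Module.End.HasEigenvalue.mem_spectrum
          (Module.End.hasEigenvalue_of_hasEigenvector
            ⟨Module.End.mem_eigenspace_iff.2 hsw, hw0⟩)
      · field_simp
    intro z hz
    exact congrArg Subtype.val (LinearMap.congr_fun h0 ⟨z, hz⟩)

omit [FiniteDimensional ℂ L] in
lemma isNilpotent_of_inclusion_mem {K G : LieSubalgebra ℂ L} (hle : K ≤ G)
    (N : LieSubalgebra ℂ G) (hN : LieRing.IsNilpotent N)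
    (hmap : ∀ z : K, LieSubalgebra.inclusion hle z ∈ N) : LieRing.IsNilpotent K := by
  let ι : K →ₗ⁅ℂ⁆ N :=
    { toFun := fun z => ⟨LieSubalgebra.inclusion hle z, hmap z⟩
      map_add' := fun a b => Subtype.ext (map_add (LieSubalgebra.inclusion hle) a b)
      map_smul' := fun c a => Subtype.ext (map_smul (LieSubalgebra.inclusion hle) c a)
      map_lie' := fun {a b} => Subtype.ext (LieHom.map_lie (LieSubalgebra.inclusion hle) a b) }
  refine Function.Injective.lieAlgebra_isNilpotent (f := ι) fun z w hzw => ?_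
  exact LieSubalgebra.inclusion_injective hle (congrArg Subtype.val hzw)

omit [FiniteDimensional ℂ L] in
lemma coe_inclusion_mem_engel {K G : LieSubalgebra ℂ L} (hle : K ≤ G) {s x : L} (t : ℂ)
    (hG : ∀ z ∈ G, ⁅s, z⁆ = 0) (hx : x ∈ G) (hK : ∀ z ∈ K, z ∈ engel ℂ (x + t • s)) (z : K) :
    LieSubalgebra.inclusion hle z ∈ engel ℂ (⟨x, hx⟩ : G) := by
  obtain ⟨k, hk⟩ := (mem_engel_iff ℂ _ _).1 (hK z z.2)
  have key : ∀ k : ℕ, (((LieAlgebra.ad ℂ G ⟨x, hx⟩) ^ k) (LieSubalgebra.inclusion hle z) : L) =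
      ((LieAlgebra.ad ℂ L (x + t • s)) ^ k) z := by
    intro k
    induction k with
    | zero => rfl
    | succ k ih =>
      rw [pow_succ', pow_succ', Module.End.mul_apply, Module.End.mul_apply, ← ih,
        LieAlgebra.ad_apply, LieAlgebra.ad_apply, LieSubalgebra.coe_bracket, add_lie, smul_lie,
        hG _ (Subtype.mem _), smul_zero, add_zero]
  refine (mem_engel_iff ℂ _ _).2 ⟨k, Subtype.ext ?_⟩
  rw [key, hk]
  rfl

omit [FiniteDimensional ℂ L] in
lemma isNilpotent_engel_add_smul {s x : L} (t : ℂ) (hmem : ∀ z ∈ engel ℂ s, ⁅s, z⁆ = 0)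
    (hxs : x ∈ engel ℂ s) (hx : LieRing.IsNilpotent (engel ℂ (⟨x, hxs⟩ : engel ℂ s)))
    (hker : ∀ z ∈ engel ℂ (x + t • s), ⁅s, z⁆ = 0) :
    LieRing.IsNilpotent (engel ℂ (x + t • s)) := by
  have hle : engel ℂ (x + t • s) ≤ engel ℂ s := fun z hz =>
    (mem_engel_iff ℂ _ _).2 ⟨1, by simpa using hker z hz⟩
  exact isNilpotent_of_inclusion_mem hle _ hx
    (coe_inclusion_mem_engel hle t hmem hxs fun z hz => hz)

/-- A semisimple element lies in a Cartan subalgebra which is an Engel subalgebra. -/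
lemma exists_isCartanSubalgebra_engel_mem {s : L} (hs : (LieAlgebra.ad ℂ L s).IsSemisimple) :
    ∃ y : L, (engel ℂ y).IsCartanSubalgebra ∧ s ∈ engel ℂ y := by
  have hmem : ∀ z ∈ engel ℂ s, ⁅s, z⁆ = 0 := fun z => lie_eq_zero_of_mem_engel hs
  obtain ⟨⟨x, hxs⟩, hx⟩ := LieAlgebra.exists_isCartanSubalgebra_engel ℂ (engel ℂ s)
  have hsx := hmem x hxs
  have hxs' : ⁅x, s⁆ = 0 := by rw [← lie_skew, hsx, neg_zero]
  obtain ⟨t, ht⟩ := exists_forall_mem_engel_add_smul hs hsx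
  exact ⟨x + t • s, ⟨isNilpotent_engel_add_smul t hmem hxs hx.nilpotent ht, normalizer_engel _ _⟩,
    (mem_engel_iff ℂ _ _).2 ⟨1, by simpa using hxs'⟩⟩
end

section
open LieAlgebra LieSubalgebra Module

variable {L : Type*} [LieRing L] [LieAlgebra ℂ L]

/-- An element `s` behaving like the neutral element `h` of an `sl₂`-triple containing `e`: it
acts on `e` with eigenvalue `2` and highest weight vectors have natural weights. -/
structure IsNeutral (s e : L) : Prop where
  lie_eq : ⁅s, e⁆ = (2 : ℂ) • e
  exists_nat : ∀ (x : L) (c : ℂ), x ≠ 0 → ⁅s, x⁆ = c • x → ⁅e, x⁆ = 0 → ∃ n : ℕ, c = n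

variable [FiniteDimensional ℂ L]

lemma IsSl2Triple.exists_isNeutral [LieAlgebra.IsKilling ℂ L] {h e f : L}
    (ht : IsSl2Triple h e f) : ∃ s n, h = s + n ∧ (ad ℂ L s).IsSemisimple ∧
      IsNilpotent (ad ℂ L n) ∧ ⁅s, n⁆ = 0 ∧ (∀ (x : L) (c : ℂ), ⁅h, x⁆ = c • x → ⁅s, x⁆ = c • x) ∧
      IsNeutral s e := by
  obtain ⟨s, n, hsn, hs, hn, hc, heig⟩ := exists_jordan_decomposition h
  refine ⟨s, n, hsn, hs, hn, hc, heig, heig _ _ (ht.lie_h_e_smul ℂ), fun x c hx hsx hex => ?_⟩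
  let W : Submodule ℂ L := adEig s c ⊓ LinearMap.ker (ad ℂ L e)
  have hxW : x ∈ W := ⟨mem_adEig.2 hsx, hex⟩
  have hW : W ≠ ⊥ := fun h0 => hx ((Submodule.mem_bot ℂ).1 (h0 ▸ hxW))
  obtain ⟨w, hw, hw0, d, hd⟩ := exists_common_eigenvector W hW h fun w hw => by
    have h1 : ⁅s, w⁆ = c • w := mem_adEig.1 hw.1
    have h2 : ⁅e, w⁆ = 0 := hw.2
    refine ⟨mem_adEig.2 ?_, ?_⟩
    · rw [leibniz_lie, h1, hsn, lie_add, lie_self, hc, add_zero, zero_lie, zero_add, lie_smul]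
    · change ⁅e, ⁅h, w⁆⁆ = 0
      rw [leibniz_lie, h2, lie_zero, add_zero, ← lie_skew e h, neg_lie, ht.lie_h_e_smul ℂ,
        smul_lie, h2,
        smul_zero, neg_zero]
  have hdc : d = c := by
    have h1 : ⁅s, w⁆ = c • w := mem_adEig.1 hw.1
    rw [heig w d hd] at h1
    exact smul_left_injective ℂ hw0 h1
  have hp : ht.HasPrimitiveVectorWith w d := ⟨hw0, hd, hw.2⟩
  rw [← hdc]
  exact hp.exists_nat

omit [FiniteDimensional ℂ L] in
lemma IsNeutral.exists_int {s e : L} (hs : IsNeutral s e) (he : IsNilpotent (ad ℂ L e)) {x : L}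
    {c : ℂ} (hx : x ≠ 0) (hsx : ⁅s, x⁆ = c • x) : ∃ n : ℤ, c = n := by
  obtain ⟨j, hj⟩ := he
  replace hj : ((ad ℂ L e) ^ j) x = 0 := by rw [hj]; rfl
  induction j generalizing x c with
  | zero => exact absurd hj hx
  | succ j ih =>
    by_cases hex : ⁅e, x⁆ = 0
    · obtain ⟨n, hn⟩ := hs.exists_nat x c hx hsx hex
      exact ⟨n, by simpa using hn⟩
    · obtain ⟨n, hn⟩ := ih hex (mem_adEig.1 (lie_mem_adEig (mem_adEig.2 hs.lie_eq)
        (mem_adEig.2 hsx) rfl)) (by rwa [pow_succ] at hj)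
      refine ⟨n - 2, ?_⟩
      push_cast
      rw [← hn]
      ring

lemma exists_lie_eq_zero_and_killingForm_ne_zero [LieAlgebra.IsKilling ℂ L] {e t : L}
    (h : ∀ u, ⁅e, u⁆ ≠ t) : ∃ z, ⁅e, z⁆ = 0 ∧ killingForm ℂ L z t ≠ 0 := by
  obtain ⟨g, hg, hle⟩ := Submodule.exists_le_ker_of_notMem
    (p := LinearMap.range (ad ℂ L e)) (v := t) (fun ⟨u, hu⟩ => h u hu)
  have hnd := LieAlgebra.IsKilling.killingForm_nondegenerate ℂ L
  let z := (LinearMap.BilinForm.toDual (killingForm ℂ L) hnd).symm g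
  have hz (x : L) : killingForm ℂ L z x = g x :=
    LinearMap.BilinForm.apply_toDual_symm_apply g x
  refine ⟨z, ?_, by rwa [hz]⟩
  have : ∀ x, killingForm ℂ L ⁅z, e⁆ x = 0 := fun x => by
    rw [killingForm, LieModule.traceForm_apply_lie_apply, ← killingForm, hz]
    exact hle ⟨x, rfl⟩
  rw [← lie_skew, hnd.1 _ this, neg_zero]

omit [FiniteDimensional ℂ L] in
lemma killingForm_eq_zero_of_mem_adEig {s x y : L} {a c : ℂ} (hx : x ∈ adEig s a)
    (hy : y ∈ adEig s c) (h : a + c ≠ 0) : killingForm ℂ L x y = 0 := by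
  rw [mem_adEig] at hx hy
  have h1 := LieModule.traceForm_apply_lie_apply ℂ L L x s y
  rw [← lie_skew, hx, hy] at h1
  simp only [map_neg, map_smul, LinearMap.neg_apply, LinearMap.smul_apply, smul_eq_mul] at h1
  have : (a + c) * LieModule.traceForm ℂ L L x y = 0 := by linear_combination -h1
  exact (mul_eq_zero.1 this).resolve_left h

section basis
omit [FiniteDimensional ℂ L]
variable {ι : Type*} (b : Basis ι ℂ L) (wt : ι → ℤ)

/-- The projection onto the span of the basis vectors of a given weight. -/
noncomputable def weightProj (c : ℤ) : L →ₗ[ℂ] L :=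
  b.constr ℂ fun i => if wt i = c then b i else 0

variable {b wt}

lemma weightProj_basis (c : ℤ) (i : ι) : weightProj b wt c (b i) = if wt i = c then b i else 0 :=
  b.constr_basis ℂ _ i

variable [Fintype ι]

lemma sum_weightProj (x : L) : ∑ c ∈ Finset.univ.image wt, weightProj b wt c x = x := by
  classical
  have : ∑ c ∈ Finset.univ.image wt, weightProj b wt c = LinearMap.id := by
    refine b.ext fun i => ?_
    rw [LinearMap.sum_apply]
    simp only [weightProj_basis]
    rw [Finset.sum_ite_eq, if_pos (Finset.mem_image_of_mem _ (Finset.mem_univ i))]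
    rfl
  simpa using LinearMap.congr_fun this x

variable {s e : L} (hwt : ∀ i, ⁅s, b i⁆ = (wt i : ℂ) • b i)
include hwt

lemma weightProj_mem (c : ℤ) (x : L) : weightProj b wt c x ∈ adEig s c := by
  rw [← b.sum_repr x, map_sum]
  refine Submodule.sum_mem _ fun i _ => ?_
  rw [map_smul, weightProj_basis]
  split_ifs with h
  · exact Submodule.smul_mem _ _ (mem_adEig.2 (h ▸ hwt i))
  · simp

lemma repr_eq_zero_of_mem_adEig {c : ℂ} {x : L} (hx : x ∈ adEig s c) {i : ι}
    (hi : (wt i : ℂ) ≠ c) : b.repr x i = 0 := by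
  have h : b.repr ⁅s, x⁆ i = wt i * b.repr x i := by
    conv_lhs => rw [← b.sum_repr x, lie_sum]
    simp only [lie_smul, hwt, smul_smul]
    rw [map_sum, Finsupp.finsetSum_apply, Finset.sum_eq_single i]
    · simp [mul_comm]
    · intro j _ hj
      simp [hj]
    · simp
  rw [mem_adEig.1 hx, map_smul, Finsupp.smul_apply, smul_eq_mul] at h
  have : ((wt i : ℂ) - c) * b.repr x i = 0 := by rw [sub_mul, ← h, sub_self]
  exact (mul_eq_zero.1 this).resolve_left (sub_ne_zero.2 hi)

lemma weightProj_eq {c d : ℤ} {x : L} (hx : x ∈ adEig s (d : ℂ)) :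
    weightProj b wt c x = if d = c then x else 0 := by
  have h : weightProj b wt c x = ∑ i, b.repr x i • if d = c then b i else 0 := by
    conv_lhs => rw [← b.sum_repr x, map_sum]
    refine Finset.sum_congr rfl fun i _ => ?_
    rw [map_smul, weightProj_basis]
    by_cases hi : wt i = d
    · rw [hi]
    · rw [repr_eq_zero_of_mem_adEig hwt hx (by exact_mod_cast hi), zero_smul, zero_smul]
  rw [h]
  split_ifs
  · exact b.sum_repr x
  · simp

lemma lie_weightProj (he : ⁅s, e⁆ = (2 : ℂ) • e) (c : ℤ) (x : L) :
    ⁅e, weightProj b wt c x⁆ = weightProj b wt (c + 2) ⁅e, x⁆ := by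
  have : (ad ℂ L e) ∘ₗ weightProj b wt c = weightProj b wt (c + 2) ∘ₗ ad ℂ L e := by
    refine b.ext fun i => ?_
    have h := lie_mem_adEig (mem_adEig.2 he) (mem_adEig.2 (hwt i))
      (c := ((wt i + 2 : ℤ) : ℂ)) (by push_cast; ring)
    simp only [LinearMap.comp_apply, weightProj_basis, ad_apply]
    rw [weightProj_eq hwt h]
    by_cases hi : wt i = c <;> simp [hi]
  exact LinearMap.congr_fun this x

omit [Fintype ι] hwt in
lemma IsNeutral.eq_zero_of_neg (hs : IsNeutral s e) {c : ℤ} (hc : c < 0) {x : L}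
    (hx : x ∈ adEig s (c : ℂ)) (hex : ⁅e, x⁆ = 0) : x = 0 := by
  by_contra h0
  obtain ⟨n, hn⟩ := hs.exists_nat x c h0 (mem_adEig.1 hx) hex
  have : c = n := by exact_mod_cast hn
  omega

lemma IsNeutral.weightProj_eq_zero (hs : IsNeutral s e) {c : ℤ} (hc : c < 0) {x : L}
    (hex : ⁅e, x⁆ = 0) : weightProj b wt c x = 0 := by
  refine hs.eq_zero_of_neg hc (weightProj_mem hwt c x) ?_
  rw [lie_weightProj hwt hs.lie_eq, hex, map_zero]

lemma IsNeutral.exists_lie_eq [FiniteDimensional ℂ L] [LieAlgebra.IsKilling ℂ L]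
    (hs : IsNeutral s e) {c : ℤ} (hc : 1 ≤ c) {t : L} (ht : t ∈ adEig s (c : ℂ)) :
    ∃ u ∈ adEig s ((c - 2 : ℤ) : ℂ), ⁅e, u⁆ = t := by
  obtain ⟨u, hu⟩ : ∃ u, ⁅e, u⁆ = t := by
    by_contra! h
    obtain ⟨z, hz, hzt⟩ := exists_lie_eq_zero_and_killingForm_ne_zero h
    rw [← sum_weightProj (b := b) (wt := wt) z, map_sum, LinearMap.sum_apply] at hzt
    refine hzt (Finset.sum_eq_zero fun a _ => ?_)
    by_cases ha : a + c = 0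
    · rw [hs.weightProj_eq_zero hwt (by omega) hz, map_zero, LinearMap.zero_apply]
    · exact killingForm_eq_zero_of_mem_adEig (weightProj_mem hwt a z) ht (by exact_mod_cast ha)
  refine ⟨weightProj b wt (c - 2) u, weightProj_mem hwt _ _, ?_⟩
  rw [lie_weightProj hwt hs.lie_eq, hu, sub_add_cancel, weightProj_eq hwt ht, if_pos rfl]

omit hwt in
lemma finrank_span_image_basis (p : ι → Prop) [DecidablePred p] :
    finrank ℂ (Submodule.span ℂ (b '' {i | p i})) = (Finset.univ.filter p).card := by
  rw [← Fintype.card_subtype, ← finrank_span_eq_card (R := ℂ) (b := fun i : {i // p i} => b i)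
    (b.linearIndependent.comp _ Subtype.val_injective)]
  rw [Set.image_eq_range]
  rfl

lemma adEig_eq_span (c : ℤ) : adEig s (c : ℂ) = Submodule.span ℂ (b '' {i | wt i = c}) := by
  refine le_antisymm (fun x hx => ?_) (Submodule.span_le.2 ?_)
  · rw [b.mem_span_image]
    intro i hi
    by_contra hne
    exact (Finsupp.mem_support_iff.1 hi) (repr_eq_zero_of_mem_adEig hwt hx (by exact_mod_cast hne))
  · rintro _ ⟨i, hi, rfl⟩
    exact mem_adEig.2 ((show wt i = c from hi) ▸ hwt i)

lemma IsNeutral.card_le [FiniteDimensional ℂ L] [LieAlgebra.IsKilling ℂ L]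
    (hs : IsNeutral s e) {c : ℤ} (hc : 1 ≤ c) :
    (Finset.univ.filter fun i => wt i = c).card ≤
      (Finset.univ.filter fun i => wt i = c - 2).card := by
  rw [← finrank_span_image_basis (b := b), ← finrank_span_image_basis (b := b), ← adEig_eq_span hwt,
    ← adEig_eq_span hwt]
  refine le_trans (Submodule.finrank_mono fun t ht => ?_)
    (Submodule.finrank_map_le (ad ℂ L e) (adEig s ((c - 2 : ℤ) : ℂ)))
  obtain ⟨u, hu, rfl⟩ := hs.exists_lie_eq hwt hc ht
  exact ⟨u, hu, rfl⟩

lemma IsNeutral.finrank_ker_add_card [FiniteDimensional ℂ L] [LieAlgebra.IsKilling ℂ L]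
    (hs : IsNeutral s e) :
    finrank ℂ (LinearMap.ker (ad ℂ L e)) + (Finset.univ.filter fun i => 2 ≤ wt i).card =
      (Finset.univ.filter fun i => 0 ≤ wt i).card := by
  rw [← finrank_span_image_basis (b := b), ← finrank_span_image_basis (b := b)]
  set W := fun j : ℤ => Submodule.span ℂ (b '' {i | j ≤ wt i})
  have hker : LinearMap.ker (ad ℂ L e) ≤ W 0 := fun z hz => by
    rw [← sum_weightProj (b := b) (wt := wt) z]
    refine Submodule.sum_mem _ fun c _ => ?_
    by_cases hc : c < 0
    · rw [hs.weightProj_eq_zero hwt hc hz]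
      exact Submodule.zero_mem _
    · have := weightProj_mem hwt c z
      rw [adEig_eq_span hwt] at this
      refine Submodule.span_mono (Set.image_mono fun i (hi : wt i = c) => ?_) this
      change 0 ≤ wt i
      omega
  have hmap : (W 0).map (ad ℂ L e) = W 2 := by
    apply le_antisymm
    · rw [Submodule.map_span, Submodule.span_le]
      rintro _ ⟨_, ⟨i, hi, rfl⟩, rfl⟩
      have h := lie_mem_adEig (mem_adEig.2 hs.lie_eq) (mem_adEig.2 (hwt i))
        (c := ((wt i + 2 : ℤ) : ℂ)) (by push_cast; ring)
      rw [adEig_eq_span hwt] at h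
      refine Submodule.span_mono (Set.image_mono fun j (hj : wt j = wt i + 2) => ?_) h
      have hi : 0 ≤ wt i := hi
      change 2 ≤ wt j
      omega
    · refine Submodule.span_le.2 ?_
      rintro _ ⟨i, hi, rfl⟩
      have hi : 2 ≤ wt i := hi
      obtain ⟨u, hu, hui⟩ := hs.exists_lie_eq hwt (by omega) (mem_adEig.2 (hwt i))
      refine ⟨u, ?_, hui⟩
      rw [adEig_eq_span hwt] at hu
      refine Submodule.span_mono (Set.image_mono fun j (hj : wt j = wt i - 2) => ?_) hu
      change 0 ≤ wt j
      omega
  have h1 := LinearMap.finrank_range_add_finrank_ker ((ad ℂ L e).domRestrict (W 0))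
  rw [LinearMap.range_domRestrict, hmap] at h1
  have h2 : LinearMap.ker ((ad ℂ L e).domRestrict (W 0)) =
      (LinearMap.ker (ad ℂ L e)).comap (W 0).subtype := rfl
  rw [h2, (Submodule.comapSubtypeEquivOfLe hker).finrank_eq, add_comm] at h1
  exact h1

end basis
end

section
open LieAlgebra LieSubalgebra Module

/-- Sparse integer matrices, as lists of triples (row, column, entry). -/
abbrev SparseMatrix := List (ℕ × ℕ × ℤ)

/-- Right fold, defined through the recursor so that it reduces quickly in the kernel. -/
noncomputable def List.fold {α β : Type} (f : α → β → β) (b : β) (l : List α) : β :=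
  List.rec b (fun a _ s => f a s) l
@[simp] lemma List.fold_nil {α β : Type} (f : α → β → β) (b : β) : List.fold f b [] = b := rfl
@[simp] lemma List.fold_cons {α β : Type} (f : α → β → β) (b : β) (a : α) (l : List α) :
    List.fold f b (a :: l) = f a (List.fold f b l) := rfl
namespace SparseMatrix

/-- The endomorphism `E_{ij}` sending the `j`-th basis vector to the `i`-th one. -/
noncomputable def unitEnd (i j : ℕ) : Module.End ℂ (ℕ →₀ ℂ) :=
  Finsupp.lsingle i ∘ₗ Finsupp.lapply j

/-- The endomorphism given by a sparse integer matrix. -/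
noncomputable def toEnd (A : SparseMatrix) : Module.End ℂ (ℕ →₀ ℂ) :=
  (A.map fun p => (p.2.2 : ℂ) • unitEnd p.1 p.2.1).sum

/-- The entry of a sparse matrix at a given position. -/
noncomputable def entry (i j : ℕ) (A : SparseMatrix) : ℤ :=
  A.fold (fun p s => bif (p.1.beq i).and (p.2.1.beq j) then p.2.2 + s else s) 0

/-- A scalar multiple of a sparse matrix. -/
noncomputable def smul (c : ℤ) (A : SparseMatrix) : SparseMatrix :=
  A.map fun p => (p.1, p.2.1, c * p.2.2)

/-- The product of two sparse matrices. -/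
noncomputable def mul (A B : SparseMatrix) : SparseMatrix :=
  A.fold (fun p s => B.fold (fun q s =>
    bif p.2.1.beq q.1 then (p.1, q.2.1, p.2.2 * q.2.2) :: s else s) s) []

/-- The transpose of a sparse matrix. -/
noncomputable def transpose (A : SparseMatrix) : SparseMatrix := A.map fun p => (p.2.1, p.1, p.2.2)

/-- The boolean test for a sparse matrix to represent zero. -/
noncomputable def isZero (A : SparseMatrix) : Bool :=
  A.fold (fun p s => bif A.entry p.1 p.2.1 == 0 then s else false) true

/-- The commutator of two sparse matrices. -/
noncomputable def bracket (A B : SparseMatrix) : SparseMatrix := mul A B ++ smul (-1) (mul B A)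

lemma unitEnd_mul_self (i j l : ℕ) : unitEnd i j * unitEnd j l = unitEnd i l := by
  ext k m
  simp [unitEnd]

lemma unitEnd_mul_of_ne {j k : ℕ} (h : j ≠ k) (i l : ℕ) : unitEnd i j * unitEnd k l = 0 := by
  ext n m
  simp [unitEnd, h]

@[simp] lemma toEnd_nil : toEnd [] = 0 := rfl

@[simp] lemma toEnd_cons (p : ℕ × ℕ × ℤ) (A : SparseMatrix) :
    toEnd (p :: A) = (p.2.2 : ℂ) • unitEnd p.1 p.2.1 + toEnd A := by
  simp [toEnd]

lemma toEnd_append (A B : SparseMatrix) : toEnd (A ++ B) = toEnd A + toEnd B := by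
  simp [toEnd]

lemma toEnd_smul (c : ℤ) (A : SparseMatrix) : toEnd (smul c A) = (c : ℂ) • toEnd A := by
  induction A with
  | nil => simp [smul]
  | cons p A ih =>
    rw [smul] at ih ⊢
    rw [List.map_cons, toEnd_cons, ih, toEnd_cons, smul_add, smul_smul]
    push_cast
    rfl

lemma toEnd_mul (A B : SparseMatrix) : toEnd (mul A B) = toEnd A * toEnd B := by
  induction A with
  | nil => simp [mul]
  | cons p A ih =>
    have h : ∀ S : SparseMatrix, toEnd (B.fold (fun q s =>
        bif p.2.1.beq q.1 then (p.1, q.2.1, p.2.2 * q.2.2) :: s else s) S) =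
        ((p.2.2 : ℂ) • unitEnd p.1 p.2.1) * toEnd B + toEnd S := by
      intro S
      clear ih
      induction B with
      | nil => simp
      | cons q B ih =>
        rw [List.fold_cons, toEnd_cons, mul_add]
        by_cases hpq : p.2.1 = q.1
        · have : p.2.1.beq q.1 = true := by simpa using hpq
          rw [this, cond_true, toEnd_cons, ih, hpq, smul_mul_smul_comm, unitEnd_mul_self]
          push_cast
          rw [add_assoc]
        · have : p.2.1.beq q.1 = false := by
            rw [← Bool.not_eq_true, Nat.beq_eq]; exact hpq
          rw [this, cond_false, ih, smul_mul_smul_comm, unitEnd_mul_of_ne hpq, smul_zero, zero_add]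
    rw [toEnd_cons, add_mul, ← ih, ← h]
    rfl

lemma toEnd_bracket (A B : SparseMatrix) : toEnd (bracket A B) = ⁅toEnd A, toEnd B⁆ := by
  rw [bracket, toEnd_append, toEnd_smul, toEnd_mul, toEnd_mul, Ring.lie_def, Int.cast_neg,
    Int.cast_one, sub_eq_add_neg]
  module

lemma toEnd_apply (A : SparseMatrix) (i j : ℕ) :
    toEnd A (Finsupp.single j 1) i = (A.entry i j : ℂ) := by
  induction A with
  | nil => simp [entry]
  | cons p A ih =>
    rw [entry, List.fold_cons, ← entry, toEnd_cons, LinearMap.add_apply, Finsupp.add_apply, ih]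
    by_cases h : p.1 = i ∧ p.2.1 = j
    · have : (p.1.beq i).and (p.2.1.beq j) = true := by simpa using h
      rw [this, cond_true]
      simp [unitEnd, h.1, h.2]
    · have : (p.1.beq i).and (p.2.1.beq j) = false := by
        rw [← Bool.not_eq_true]; simpa using h
      rw [this, cond_false]
      have h' : ¬ (p.1 = i ∧ j = p.2.1) := fun h' => h ⟨h'.1, h'.2.symm⟩
      rw [not_and_or] at h'
      rcases h' with h' | h' <;> simp [unitEnd, Finsupp.single_apply, h']

lemma entry_eq_zero {A : SparseMatrix} {i j : ℕ} (h : ∀ p ∈ A, ¬ (p.1 = i ∧ p.2.1 = j)) :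
    A.entry i j = 0 := by
  induction A with
  | nil => rfl
  | cons p A ih =>
    have hp : (p.1.beq i).and (p.2.1.beq j) = false := by
      rw [← Bool.not_eq_true]
      simpa using h p (by simp)
    rw [entry, List.fold_cons, ← entry, hp, cond_false]
    exact ih fun q hq => h q (by simp [hq])

lemma isZero_cons_aux {A B : SparseMatrix}
    (h : B.fold (fun p s => bif A.entry p.1 p.2.1 == 0 then s else false) true = true) :
    ∀ p ∈ B, A.entry p.1 p.2.1 = 0 := by
  induction B with
  | nil => simp
  | cons q B ih =>
    rw [List.fold_cons] at h
    by_cases hq : A.entry q.1 q.2.1 = 0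
    · rw [hq, beq_self_eq_true, cond_true] at h
      intro p hp
      rcases List.mem_cons.1 hp with rfl | hp
      · exact hq
      · exact ih h p hp
    · have : (A.entry q.1 q.2.1 == 0) = false := by simpa using hq
      rw [this, cond_false] at h
      exact absurd h (by simp)

lemma toEnd_eq_zero {A : SparseMatrix} (hA : A.isZero = true) : toEnd A = 0 := by
  refine Finsupp.lhom_ext' fun j => LinearMap.ext_ring (Finsupp.ext fun i => ?_)
  change toEnd A (Finsupp.single j 1) i = 0
  rw [toEnd_apply]
  by_cases h : ∃ p ∈ A, p.1 = i ∧ p.2.1 = j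
  · obtain ⟨p, hp, rfl, rfl⟩ := h
    rw [isZero_cons_aux hA p hp, Int.cast_zero]
  · rw [entry_eq_zero fun p hp hq => h ⟨p, hp, hq⟩, Int.cast_zero]

end SparseMatrix

namespace F4Model

/-- Root vectors of `F₄` for the positive roots in the 27-dimensional representation: the simple
roots come first, and the roots are ordered by height. -/
def posRootMatrices : List SparseMatrix :=
  [[(0, 1, 1), (5, 7, 1), (6, 9, 1), (8, 11, 1), (10, 12, 1), (10, 13, 1), (12, 15, 1),
   (13, 15, 1), (16, 17, 1), (18, 19, 1), (20, 21, 1), (25, 26, 1)], [(1, 2, 1), (3, 5, 1),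
   (4, 6, 1), (8, 10, 1), (11, 13, 1), (11, 14, 1), (13, 16, 1), (14, 16, 1), (15, 17, 1),
   (19, 22, 1), (21, 23, 1), (24, 25, 1)], [(2, 3, 1), (6, 8, 1), (9, 11, 1), (16, 18, 1),
   (17, 19, 1), (23, 24, 1)], [(3, 4, 1), (5, 6, 1), (7, 9, 1), (18, 20, 1), (19, 21, 1),
   (22, 23, 1)], [(0, 2, 1), (3, 7, -1), (4, 9, -1), (8, 12, -1), (8, 14, 1), (10, 16, 1),
   (11, 15, -1), (12, 17, 1), (14, 17, -1), (18, 22, 1), (20, 23, 1), (24, 26, -1)], [(1, 3, 1),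
   (2, 5, -1), (4, 8, 1), (6, 10, -1), (9, 13, -1), (9, 14, -1), (13, 18, 1), (14, 18, 1),
   (15, 19, 1), (17, 22, -1), (21, 24, 1), (23, 25, -1)], [(2, 4, 1), (5, 8, -1), (7, 11, -1),
   (16, 20, 1), (17, 21, 1), (22, 24, -1)], [(0, 3, 1), (2, 7, 1), (4, 11, -1), (6, 12, 1),
   (6, 14, -1), (9, 15, 1), (10, 18, 1), (12, 19, 1), (14, 19, -1), (16, 22, -1), (20, 24, 1),
   (23, 26, 1)], [(1, 5, -1), (4, 10, -1), (9, 16, 1), (11, 18, 1), (15, 22, -1), (21, 25, -1)],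
   [(1, 4, 1), (2, 6, -1), (3, 8, -1), (5, 10, 1), (7, 13, 1), (7, 14, 1), (13, 20, 1),
   (14, 20, 1), (15, 21, 1), (17, 23, -1), (19, 24, -1), (22, 25, 1)], [(0, 5, -1), (1, 7, 1),
   (4, 12, 1), (4, 13, 1), (6, 16, 1), (8, 18, 1), (9, 17, -1), (11, 19, -1), (12, 22, -1),
   (13, 22, -1), (20, 25, -1), (21, 26, 1)], [(0, 4, 1), (2, 9, 1), (3, 11, 1), (5, 12, -1),
   (5, 14, 1), (7, 15, -1), (10, 20, 1), (12, 21, 1), (14, 21, -1), (16, 23, -1), (18, 24, -1),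
   (22, 26, -1)], [(1, 6, 1), (3, 10, -1), (7, 16, 1), (11, 20, -1), (15, 23, 1), (19, 25, -1)],
   [(0, 7, 1), (4, 15, -1), (6, 17, -1), (8, 19, -1), (10, 22, -1), (20, 26, 1)], [(0, 6, 1),
   (1, 9, -1), (3, 12, 1), (3, 13, 1), (5, 16, 1), (7, 17, -1), (8, 20, -1), (11, 21, 1),
   (12, 23, 1), (13, 23, 1), (18, 25, -1), (19, 26, 1)], [(1, 8, -1), (2, 10, -1), (7, 18, -1),
   (9, 20, -1), (15, 24, -1), (17, 25, -1)], [(0, 9, -1), (3, 15, -1), (5, 17, -1), (8, 21, 1),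
   (10, 23, 1), (18, 26, 1)], [(0, 8, -1), (1, 11, 1), (2, 12, 1), (2, 13, 1), (5, 18, -1),
   (6, 20, -1), (7, 19, 1), (9, 21, 1), (12, 24, -1), (13, 24, -1), (16, 25, -1), (17, 26, 1)],
   [(0, 11, 1), (2, 15, -1), (5, 19, 1), (6, 21, 1), (10, 24, -1), (16, 26, 1)], [(0, 10, 1),
   (1, 12, 1), (1, 14, -1), (2, 16, -1), (3, 18, -1), (4, 20, -1), (7, 22, -1), (9, 23, -1),
   (11, 24, -1), (12, 25, 1), (14, 25, -1), (15, 26, 1)], [(0, 13, -1), (0, 14, -1), (1, 15, -1),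
   (2, 17, 1), (3, 19, 1), (4, 21, 1), (5, 22, -1), (6, 23, -1), (8, 24, -1), (10, 25, 1),
   (13, 26, 1), (14, 26, 1)], [(0, 16, 1), (1, 17, 1), (3, 22, -1), (4, 23, -1), (8, 25, 1),
   (11, 26, 1)], [(0, 18, -1), (1, 19, -1), (2, 22, -1), (4, 24, 1), (6, 25, 1), (9, 26, 1)],
   [(0, 20, 1), (1, 21, 1), (2, 23, 1), (3, 24, 1), (5, 25, 1), (7, 26, 1)]]

/-- The positive roots of `F₄` in the basis of simple roots. -/
def posRoots : List (List ℤ) :=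
  [[1, 0, 0, 0], [0, 1, 0, 0], [0, 0, 1, 0], [0, 0, 0, 1], [1, 1, 0, 0], [0, 1, 1, 0],
   [0, 0, 1, 1], [1, 1, 1, 0], [0, 2, 1, 0], [0, 1, 1, 1], [1, 2, 1, 0], [1, 1, 1, 1],
   [0, 2, 1, 1], [2, 2, 1, 0], [1, 2, 1, 1], [0, 2, 2, 1], [2, 2, 1, 1], [1, 2, 2, 1],
   [2, 2, 2, 1], [1, 3, 2, 1], [2, 3, 2, 1], [2, 4, 2, 1], [2, 4, 3, 1], [2, 4, 3, 2]]

/-- The matrices of the fundamental coweights in the 27-dimensional representation. -/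
def coweightMatrices : List SparseMatrix :=
  [[(0, 0, 2), (1, 1, 1), (2, 2, 1), (3, 3, 1), (4, 4, 1), (5, 5, 1), (6, 6, 1), (8, 8, 1),
   (10, 10, 1), (15, 15, -1), (17, 17, -1), (19, 19, -1), (21, 21, -1), (22, 22, -1),
   (23, 23, -1), (24, 24, -1), (25, 25, -1), (26, 26, -2)], [(0, 0, 3), (1, 1, 3), (2, 2, 2),
   (3, 3, 2), (4, 4, 2), (5, 5, 1), (6, 6, 1), (7, 7, 1), (8, 8, 1), (9, 9, 1), (11, 11, 1),
   (16, 16, -1), (17, 17, -1), (18, 18, -1), (19, 19, -1), (20, 20, -1), (21, 21, -1),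
   (22, 22, -2), (23, 23, -2), (24, 24, -2), (25, 25, -3), (26, 26, -3)], [(0, 0, 2), (1, 1, 2),
   (2, 2, 2), (3, 3, 1), (4, 4, 1), (5, 5, 1), (6, 6, 1), (7, 7, 1), (9, 9, 1), (18, 18, -1),
   (19, 19, -1), (20, 20, -1), (21, 21, -1), (22, 22, -1), (23, 23, -1), (24, 24, -2),
   (25, 25, -2), (26, 26, -2)], [(0, 0, 1), (1, 1, 1), (2, 2, 1), (3, 3, 1), (5, 5, 1), (7, 7, 1),
   (20, 20, -1), (21, 21, -1), (23, 23, -1), (24, 24, -1), (25, 25, -1), (26, 26, -1)]]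

/-- Integral linear combinations of the basis. -/
abbrev Comb := List (Fin 52 × ℤ)

/-- The brackets of the generators `Eᵢ` and `Fᵢ` with the basis, as integral combinations of the
basis. -/
def bracketTable : List (List Comb) := [
  [[], [(4, 1)], [], [], [], [(7, 1)], [], [], [(10, 1)], [(11, 1)], [(13, 2)], [], [(14, 1)],
    [], [(16, 2)], [(17, 1)], [], [(18, 2)], [], [(20, 1)], [], [], [], [], [(48, 2), (49, -1)],
    [], [], [], [(25, -1)], [], [], [(29, -1)], [], [], [(32, -2)], [(33, -1)], [], [(34, -1)],
    [(36, -2)], [], [(38, -1)], [(39, -2)], [(41, -1)], [], [(43, -1)], [], [], [], [(0, -1)],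
    [], [], []],
  [[(4, -1)], [], [(5, 1)], [], [], [(8, 2)], [(9, 1)], [(10, 1)], [], [(12, -2)], [],
    [(14, -1)], [], [], [], [], [], [(19, 1)], [(20, 1)], [], [(21, 2)], [], [], [], [],
    [(48, -1), (49, 2), (50, -2)], [], [], [(24, 1)], [(26, -2)], [], [], [(29, -1)], [(30, -2)],
    [(31, -1)], [], [(33, 1)], [], [(35, 1)], [], [], [], [], [(41, -1)], [(42, -2)], [(44, -1)],
    [], [], [], [(1, -1)], [], []],
  [[], [(5, -1)], [], [(6, 1)], [(7, -1)], [], [], [], [], [], [], [], [(15, 1)], [], [(17, 1)],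
    [], [(18, 1)], [], [], [], [], [(22, 1)], [], [], [], [], [(49, -1), (50, 2), (51, -1)], [],
    [], [(25, 1)], [(27, -1)], [(28, 1)], [], [], [], [], [], [], [], [(36, -1)], [], [(38, -1)],
    [(40, -1)], [], [], [], [(45, -1)], [], [], [], [(2, -1)], []],
  [[], [], [(6, -1)], [], [], [(9, -1)], [], [(11, -1)], [(12, 1)], [], [(14, 1)], [], [],
    [(16, 1)], [], [], [], [], [], [], [], [], [(23, 1)], [], [], [], [], [(50, -1), (51, 2)],
    [], [], [(26, 1)], [], [], [(29, 1)], [], [(31, 1)], [(32, -1)], [], [(34, -1)], [],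
    [(37, -1)], [], [], [], [], [], [], [(46, -1)], [], [], [], [(3, -1)]],
  [[(48, -2), (49, 1)], [], [], [], [(1, 1)], [], [], [(5, 1)], [], [], [(8, 2)], [(9, 1)], [],
    [(10, 1)], [(12, 2)], [], [(14, 1)], [(15, 2)], [(17, 1)], [], [(19, 1)], [], [], [], [],
    [(28, -1)], [], [], [], [(31, -1)], [], [], [(34, -1)], [(35, -1)], [(37, -2)], [],
    [(38, -1)], [], [(40, -2)], [(41, -1)], [], [(42, -2)], [], [(44, -1)], [], [], [], [],
    [(24, 1)], [], [], []],
  [[], [(48, 1), (49, -2), (50, 2)], [], [], [(0, -1)], [(2, 2)], [], [], [(5, 1)], [(6, 2)],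
    [(7, 1)], [], [(9, -1)], [], [(11, -1)], [], [], [], [], [(17, 1)], [(18, 2)], [(20, 1)], [],
    [], [(28, 1)], [], [(29, -1)], [], [], [(32, -2)], [(33, -1)], [(34, -1)], [], [(36, 2)], [],
    [(38, 1)], [], [], [], [], [], [(43, -1)], [(44, -1)], [], [(45, -2)], [], [], [], [],
    [(25, 1)], [], []],
  [[], [], [(49, 1), (50, -2), (51, 1)], [], [], [(1, -1)], [(3, 1)], [(4, -1)], [], [], [], [],
    [], [], [], [(12, 1)], [], [(14, 1)], [(16, 1)], [], [], [], [(21, 1)], [], [], [(29, 1)],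
    [], [(30, -1)], [(31, 1)], [], [], [], [], [], [], [], [(39, -1)], [], [(41, -1)], [],
    [(42, -1)], [], [], [], [], [(46, -1)], [], [], [], [], [(26, 1)], []],
  [[], [], [], [(50, 1), (51, -2)], [], [], [(2, -1)], [], [], [(5, -1)], [], [(7, -1)],
    [(8, 1)], [], [(10, 1)], [], [(13, 1)], [], [], [], [], [], [], [(22, 1)], [], [], [(30, 1)],
    [], [], [(33, 1)], [], [(35, 1)], [(36, -1)], [], [(38, -1)], [], [], [(40, -1)], [], [], [],
    [], [], [], [], [], [(47, -1)], [], [], [], [], [(27, 1)]]]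

/-- For each positive root, a triple `(i, j, m)`: for non-simple roots, the bracket of the `i`-th
and the `j`-th root vector is `m` times its root vector. -/
def rootParents : List (ℕ × ℕ × ℤ) :=
  [(0, 0, 1), (1, 1, 1), (2, 2, 1), (3, 3, 1), (0, 1, 1), (1, 2, 1), (2, 3, 1), (0, 5, 1),
   (1, 5, 2), (1, 6, 1), (0, 8, 1), (0, 9, 1), (3, 8, 1), (0, 10, 2), (0, 12, 1), (2, 12, 1),
   (3, 13, 1), (0, 15, 1), (2, 16, 1), (1, 17, 1), (0, 19, 1), (1, 20, 2), (2, 21, 1), (3, 22, 1)]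

/-- The table of the 52 basis matrices: positive root vectors, negative root vectors and
fundamental coweights. -/
noncomputable def basisTable : List SparseMatrix :=
  posRootMatrices ++ posRootMatrices.map SparseMatrix.transpose ++ coweightMatrices

/-- The basis matrices of `F₄`. -/
noncomputable def basisMatrix (k : Fin 52) : SparseMatrix := basisTable.getD k.val []

/-- The weights of the basis matrices, evaluated at the fundamental coweights. -/
def weight (k : Fin 52) : List ℤ :=
  (posRoots ++ posRoots.map (List.map fun x => -x)).getD k.val [0, 0, 0, 0]

/-- The sparse matrix of an integral linear combination of the basis. -/
noncomputable def combMatrix (w : Comb) : SparseMatrix :=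
  w.fold (fun p s => (basisMatrix p.1).smul p.2 ++ s) []

/-- The row, column and entry of a nonzero position of a positive root vector. -/
def pivot (k : ℕ) : ℕ × ℕ × ℤ := (posRootMatrices.getD k []).headD (0, 0, 0)

/-- The entries whose sum is a coordinate with respect to the basis. -/
noncomputable def coordEntries (k : ℕ) : SparseMatrix :=
  if k < 24 then [pivot k]
  else if k < 48 then SparseMatrix.transpose [pivot (k - 24)]
  else let p := pivot (k - 48); [(p.1, p.1, 1), (p.2.1, p.2.1, -1)]

/-- The coordinate functions of sparse matrices with respect to the basis. -/
noncomputable def coord (k : Fin 52) (A : SparseMatrix) : ℤ :=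
  (coordEntries k.val).fold (fun p s => p.2.2 * A.entry p.1 p.2.1 + s) 0

/-- The test for a bracket relation between integral combinations. -/
noncomputable def lieCheck (u v w : Comb) : Bool :=
  (SparseMatrix.bracket (combMatrix u) (combMatrix v) ++ (combMatrix w).smul (-1)).isZero

/-- The generators `E₀, …, E₃, F₀, …, F₃`, as indices of basis vectors. -/
def gen (i : Fin 8) : Fin 52 :=
  if i.val < 4 then i.castLE (by decide) else (i.addNat 20).castLE (by decide)

/-- The brackets of a generator with a basis vector. -/
def genBracket (i : Fin 8) (k : Fin 52) : Comb := (bracketTable.getD i.val []).getD k.val []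

lemma coord_basisMatrix : ∀ k l : Fin 52, coord k (basisMatrix l) = if k = l then 1 else 0 := by
  decide +kernel

lemma lieCheck_gen : ∀ (i : Fin 8) (k : Fin 52),
    lieCheck [(gen i, 1)] [(k, 1)] (genBracket i k) = true := by
  decide +kernel

lemma lieCheck_coweight : ∀ (i : Fin 4) (k : Fin 52),
    lieCheck [(i.natAdd 48, 1)] [(k, 1)] [(k, (weight k).getD i.val 0)] = true := by
  decide +kernel

end F4Model
end

section
open LieAlgebra LieSubalgebra Module
namespace F4Model

/-- An integral linear combination of 52 given vectors. -/
noncomputable def combination {M : Type*} [AddCommGroup M] [Module ℂ M] (m : Fin 52 → M)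
    (w : Comb) : M :=
  (w.map fun p => (p.2 : ℂ) • m p.1).sum

section combination
variable {M N : Type*} [AddCommGroup M] [Module ℂ M] [AddCommGroup N] [Module ℂ N]

@[simp] lemma combination_nil (m : Fin 52 → M) : combination m [] = 0 := rfl

@[simp] lemma combination_cons (m : Fin 52 → M) (p : Fin 52 × ℤ) (w : Comb) :
    combination m (p :: w) = (p.2 : ℂ) • m p.1 + combination m w := by
  simp [combination]

lemma combination_mem {S : Submodule ℂ M} {m : Fin 52 → M} {w : Comb} (h : ∀ p ∈ w, m p.1 ∈ S) :
    combination m w ∈ S := by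
  induction w with
  | nil => simp
  | cons p w ih =>
    rw [combination_cons]
    exact S.add_mem (S.smul_mem _ (h p (by simp))) (ih fun q hq => h q (by simp [hq]))

lemma combination_filter (m : Fin 52 → M) (w : Comb) :
    combination m (w.filter fun p => p.2 ≠ 0) = combination m w := by
  induction w with
  | nil => rfl
  | cons p w ih =>
    by_cases hp : p.2 = 0 <;> simp [hp, ← ih]

lemma map_combination (g : M →ₗ[ℂ] N) (m : Fin 52 → M) (w : Comb) :
    g (combination m w) = combination (fun k => g (m k)) w := by
  induction w with
  | nil => simp
  | cons p w ih => rw [combination_cons, map_add, map_smul, ih, combination_cons]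

end combination

/-- A family of vectors of a Lie algebra satisfying the bracket relations of the basis matrices. -/
def IsModel {V : Type*} [LieRing V] [LieAlgebra ℂ V] (m : Fin 52 → V) : Prop :=
  ∀ u v w : Comb, lieCheck u v w = true → ⁅combination m u, combination m v⁆ = combination m w

/-- The entries of the Cartan matrix of `F₄`. -/
def cartan (i j : Fin 4) : ℤ := CartanMatrix.F₄ i j

/-- The bracket of a generator with a combination of basis vectors. -/
def lieGen (i : Fin 8) (w : Comb) : Comb :=
  w.flatMap fun p => (genBracket i p.1).map fun q => (q.1, p.2 * q.2)

section model
variable {V : Type*} [LieRing V] [LieAlgebra ℂ V] {m : Fin 52 → V}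

lemma IsModel.lie_basis_combination (hm : IsModel m) (i : Fin 8) (w : Comb) :
    ⁅m (gen i), combination m w⁆ = combination m (lieGen i w) := by
  induction w with
  | nil => simp [lieGen]
  | cons p w ih =>
    have h := hm _ _ _ (lieCheck_gen i p.1)
    simp only [combination_cons, combination_nil, Int.cast_one, one_smul, add_zero] at h
    rw [combination_cons, lie_add, lie_smul, ih, h]
    simp [lieGen, combination, Function.comp_def, mul_smul,
      List.smul_sum]

/-- The toral element with given coordinates with respect to the fundamental coweights. -/
noncomputable def toral {M : Type*} [AddCommGroup M] [Module ℂ M] (m : Fin 52 → M)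
    (n : Fin 4 → ℂ) : M :=
  ∑ i, n i • m (i.natAdd 48)

lemma IsModel.lie_coweight_basis (hm : IsModel m) (i : Fin 4) (k : Fin 52) :
    ⁅m (i.natAdd 48), m k⁆ = ((weight k).getD i.val 0 : ℂ) • m k := by
  simpa using hm _ _ _ (lieCheck_coweight i k)

lemma IsModel.lie_toral_basis (hm : IsModel m) (n : Fin 4 → ℂ) (k : Fin 52) :
    ⁅toral m n, m k⁆ =
      (∑ i, n i * ((weight k).getD i.val 0 : ℂ)) • m k := by
  simp only [toral, sum_lie, smul_lie, hm.lie_coweight_basis, Finset.sum_smul, mul_smul]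

lemma weight_coweight : ∀ i j : Fin 4, (weight (i.natAdd 48)).getD j.val 0 = 0 := by decide

lemma IsModel.lie_toral_toral (hm : IsModel m) (n n' : Fin 4 → ℂ) :
    ⁅toral m n, toral m n'⁆ = 0 := by
  rw [toral.eq_def _ n', lie_sum]
  refine Finset.sum_eq_zero fun i _ => ?_
  rw [lie_smul, hm.lie_toral_basis]
  simp only [weight_coweight, Int.cast_zero, mul_zero, Finset.sum_const_zero, zero_smul, smul_zero]

/-- The images of the Chevalley generators. -/
noncomputable def chevalley (m : Fin 52 → V) : CartanMatrix.Generators (Fin 4) → V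
  | .H i => toral m fun j => (cartan i j : ℂ)
  | .E i => m (gen (i.castAdd 4))
  | .F i => m (gen (i.natAdd 4))

/-- The value of the weight of a basis vector at a coweight. -/
def weightAt (n : Fin 4 → ℤ) (k : Fin 52) : ℤ :=
  n 0 * (weight k).getD 0 0 + n 1 * (weight k).getD 1 0 + n 2 * (weight k).getD 2 0 +
    n 3 * (weight k).getD 3 0

lemma sum_mul_weight (n : Fin 4 → ℤ) (k : Fin 52) :
    ∑ i, (n i : ℂ) * ((weight k).getD i.val 0 : ℂ) = weightAt n k := by
  simp [weightAt, Fin.sum_univ_four]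

lemma weightAt_cartan : ∀ i j : Fin 4,
    weightAt (cartan i) (gen (j.castAdd 4)) = cartan i j ∧
    weightAt (cartan i) (gen (j.natAdd 4)) = -cartan i j := by
  decide

lemma genBracket_E_F : ∀ i j : Fin 4, genBracket (i.castAdd 4) (gen (j.natAdd 4)) =
    if i = j then ((List.finRange 4).map fun j => (j.natAdd 48, cartan i j)).filter
      (fun p => p.2 ≠ 0) else [] := by
  decide

lemma lieGen_serre : ∀ i j : Fin 4,
    (lieGen (i.castAdd 4))^[(-cartan i j).toNat]
      (genBracket (i.castAdd 4) (gen (j.castAdd 4))) = [] ∧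
    (lieGen (i.natAdd 4))^[(-cartan i j).toNat]
      (genBracket (i.natAdd 4) (gen (j.natAdd 4))) = [] := by
  decide

lemma IsModel.ad_pow_combination (hm : IsModel m) (i : Fin 8) (w : Comb) (n : ℕ) :
    (ad ℂ (V) (m (gen i)) ^ n) (combination m w) =
      combination m ((lieGen i)^[n] w) := by
  induction n generalizing w with
  | zero => rfl
  | succ n ih =>
    rw [pow_succ, Module.End.mul_apply, ad_apply, hm.lie_basis_combination, ih,
      Function.iterate_succ_apply]

lemma IsModel.lie_basis_gen (hm : IsModel m) (i : Fin 8) (k : Fin 52) :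
    ⁅m (gen i), m k⁆ = combination m (genBracket i k) := by
  simpa using hm _ _ _ (lieCheck_gen i k)

/-- The representation of the free Lie algebra given by the images of the generators. -/
noncomputable def freeRep (m : Fin 52 → V) :
    FreeLieAlgebra ℂ (CartanMatrix.Generators (Fin 4)) →ₗ⁅ℂ⁆ V :=
  FreeLieAlgebra.lift ℂ (chevalley m)

@[simp] lemma freeRep_of (g : CartanMatrix.Generators (Fin 4)) :
    freeRep m (FreeLieAlgebra.of ℂ g) = chevalley m g :=
  FreeLieAlgebra.lift_of_apply ..

lemma map_ad_pow (x y : FreeLieAlgebra ℂ (CartanMatrix.Generators (Fin 4))) (n : ℕ) :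
    freeRep m ((ad ℂ (FreeLieAlgebra ℂ (CartanMatrix.Generators (Fin 4))) x ^ n) y) =
      (ad ℂ (V) (freeRep m x) ^ n) (freeRep m y) := by
  induction n with
  | zero => rfl
  | succ n ih =>
    rw [pow_succ', pow_succ', Module.End.mul_apply, Module.End.mul_apply, ad_apply, ad_apply,
      LieHom.map_lie, ih]

lemma IsModel.freeRep_of_mem_relations (hm : IsModel m)
    {x : FreeLieAlgebra ℂ (CartanMatrix.Generators (Fin 4))}
    (hx : x ∈ CartanMatrix.Relations.toSet ℂ CartanMatrix.F₄) : freeRep m x = 0 := by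
  rcases hx with ((((⟨⟨i, j⟩, rfl⟩ | ⟨⟨i, j⟩, rfl⟩) | ⟨⟨i, j⟩, rfl⟩) | ⟨⟨i, j⟩, rfl⟩) |
    ⟨⟨i, j⟩, rfl⟩) | ⟨⟨i, j⟩, rfl⟩
  · simp only [CartanMatrix.Relations.HH, Function.uncurry, Function.comp_apply, LieHom.map_lie,
      freeRep_of, chevalley]
    exact hm.lie_toral_toral _ _
  · simp only [CartanMatrix.Relations.EF, Function.uncurry, Function.comp_apply]
    have h := hm.lie_basis_gen (i.castAdd 4) (gen (j.natAdd 4))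
    rw [genBracket_E_F] at h
    by_cases hij : i = j
    · subst hij
      rw [if_pos rfl] at h ⊢
      rw [map_sub, LieHom.map_lie, freeRep_of, freeRep_of, freeRep_of, sub_eq_zero]
      simp only [chevalley]
      rw [h]
      rw [combination_filter]
      simp only [combination, List.map_map, Function.comp_def, toral, Fin.sum_univ_def, cartan]
    · rw [if_neg hij] at h ⊢
      rw [LieHom.map_lie, freeRep_of, freeRep_of]
      exact h
  · simp only [CartanMatrix.Relations.HE, Function.uncurry, Function.comp_apply, LieHom.map_lie,
      map_sub, map_zsmul, freeRep_of, chevalley]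
    rw [hm.lie_toral_basis, sum_mul_weight, (weightAt_cartan i j).1]
    simp [cartan, Int.cast_smul_eq_zsmul]
  · simp only [CartanMatrix.Relations.HF, Function.uncurry, Function.comp_apply, LieHom.map_lie,
      map_add, map_zsmul, freeRep_of, chevalley]
    rw [hm.lie_toral_basis, sum_mul_weight, (weightAt_cartan i j).2]
    simp [cartan, Int.cast_smul_eq_zsmul]
  · simp only [CartanMatrix.Relations.adE, Function.uncurry, Function.comp_apply]
    rw [map_ad_pow, LieHom.map_lie]
    simp only [freeRep_of, chevalley]
    rw [hm.lie_basis_gen, hm.ad_pow_combination]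
    exact congrArg (combination m) (lieGen_serre i j).1
  · simp only [CartanMatrix.Relations.adF, Function.uncurry, Function.comp_apply]
    rw [map_ad_pow, LieHom.map_lie]
    simp only [freeRep_of, chevalley]
    rw [hm.lie_basis_gen, hm.ad_pow_combination]
    exact congrArg (combination m) (lieGen_serre i j).2

/-- The representation of the Lie algebra defined by the Serre relations of type `F₄`. -/
noncomputable def IsModel.serreRep (hm : IsModel m) : f₄ ℂ →ₗ⁅ℂ⁆ V where
  toLinearMap := Submodule.liftQ
    (CartanMatrix.Relations.toIdeal ℂ CartanMatrix.F₄).toSubmodule (freeRep m).toLinearMap (by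
      have : CartanMatrix.Relations.toIdeal ℂ CartanMatrix.F₄ ≤ (freeRep m).ker :=
        LieSubmodule.lieSpan_le.2 fun x hx => LieHom.mem_ker.2 (hm.freeRep_of_mem_relations hx)
      exact fun x hx => LieHom.mem_ker.1 (this hx))
  map_lie' := fun {x y} => by
    obtain ⟨x, rfl⟩ := LieSubmodule.Quotient.surjective_mk' _ x
    obtain ⟨y, rfl⟩ := LieSubmodule.Quotient.surjective_mk' _ y
    exact (freeRep m).map_lie x y

lemma IsModel.range_serreRep (hm : IsModel m) : Set.range hm.serreRep = Set.range (freeRep m) := by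
  ext x
  constructor
  · rintro ⟨y, rfl⟩
    obtain ⟨y, rfl⟩ := LieSubmodule.Quotient.surjective_mk' _ y
    exact ⟨y, rfl⟩
  · rintro ⟨y, rfl⟩
    exact ⟨LieSubmodule.Quotient.mk y, rfl⟩

/-- The endomorphisms in the span of the basis matrices which normalize it. -/
noncomputable def normalizing (m : Fin 52 → V) : LieSubalgebra ℂ (V) where
  carrier := {x | x ∈ Submodule.span ℂ (Set.range m) ∧
    ∀ y ∈ Submodule.span ℂ (Set.range m), ⁅x, y⁆ ∈ Submodule.span ℂ (Set.range m)}
  add_mem' ha hb := ⟨Submodule.add_mem _ ha.1 hb.1, fun y hy => by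
    rw [add_lie]; exact Submodule.add_mem _ (ha.2 y hy) (hb.2 y hy)⟩
  zero_mem' := ⟨Submodule.zero_mem _, fun y _ => by rw [zero_lie]; exact Submodule.zero_mem _⟩
  smul_mem' c x hx := ⟨Submodule.smul_mem _ c hx.1, fun y hy => by
    rw [smul_lie]; exact Submodule.smul_mem _ c (hx.2 y hy)⟩
  lie_mem' ha hb := ⟨ha.2 _ hb.1, fun y hy => by
    rw [lie_lie]
    exact Submodule.sub_mem _ (ha.2 _ (hb.2 y hy)) (hb.2 _ (ha.2 y hy))⟩

lemma combination_mem_span (w : Comb) :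
    combination m w ∈ Submodule.span ℂ (Set.range m) :=
  combination_mem fun p _ => Submodule.subset_span ⟨p.1, rfl⟩

lemma IsModel.chevalley_mem (hm : IsModel m) (g : CartanMatrix.Generators (Fin 4)) :
    chevalley m g ∈ normalizing m := by
  have key : ∀ x : V, x ∈ Submodule.span ℂ (Set.range m) →
      (∀ k, ⁅x, m k⁆ ∈ Submodule.span ℂ (Set.range m)) → x ∈ normalizing m := by
    refine fun x hx h => ⟨hx, fun y hy => ?_⟩
    induction hy using Submodule.span_induction with
    | mem y hy => obtain ⟨k, rfl⟩ := hy; exact h k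
    | zero => rw [lie_zero]; exact Submodule.zero_mem _
    | add y z _ _ hy hz => rw [lie_add]; exact Submodule.add_mem _ hy hz
    | smul c y _ hy => rw [lie_smul]; exact Submodule.smul_mem _ c hy
  cases g with
  | H i =>
    have h : toral m (fun j => (cartan i j : ℂ)) ∈ Submodule.span ℂ (Set.range m) :=
      Submodule.sum_mem _ fun j _ => Submodule.smul_mem _ _ (Submodule.subset_span ⟨_, rfl⟩)
    refine key _ h fun k => ?_
    rw [chevalley, hm.lie_toral_basis]
    exact Submodule.smul_mem _ _ (Submodule.subset_span ⟨_, rfl⟩)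
  | E i =>
    refine key _ (Submodule.subset_span ⟨_, rfl⟩) fun k => ?_
    rw [chevalley, hm.lie_basis_gen]
    exact combination_mem_span _
  | F i =>
    refine key _ (Submodule.subset_span ⟨_, rfl⟩) fun k => ?_
    rw [chevalley, hm.lie_basis_gen]
    exact combination_mem_span _

lemma IsModel.freeRep_mem_span (hm : IsModel m) (x) :
    freeRep m x ∈ Submodule.span ℂ (Set.range m) := by
  let g : FreeLieAlgebra ℂ (CartanMatrix.Generators (Fin 4)) →ₗ⁅ℂ⁆ (normalizing m) :=
    FreeLieAlgebra.lift ℂ fun a => ⟨chevalley m a, hm.chevalley_mem a⟩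
  have : freeRep m = (normalizing m).incl.comp g := by
    refine FreeLieAlgebra.hom_ext fun a => ?_
    rw [freeRep_of, LieHom.comp_apply, FreeLieAlgebra.lift_of_apply]
    rfl
  rw [this]
  exact (g x).2.1

/-- The inverse Cartan matrix of `F₄`. -/
def inverseCartan : Matrix (Fin 4) (Fin 4) ℤ :=
  !![2, 3, 4, 2; 3, 6, 8, 4; 2, 4, 6, 3; 1, 2, 3, 2]

lemma inverseCartan_mul : inverseCartan * CartanMatrix.F₄ = 1 := by
  decide

lemma genBracket_rootParents : ∀ k : Fin 24, 4 ≤ k.val →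
    ∃ i : Fin 4, ∃ j : Fin 24, j < k ∧ ∃ c : ℤ, c ≠ 0 ∧
      genBracket (i.castAdd 4) (j.castLE (by decide)) = [(k.castLE (by decide), c)] ∧
      genBracket (i.natAdd 4) ((j.natAdd 24).castLE (by decide)) =
        [((k.natAdd 24).castLE (by decide), -c)] := by
  have h : ∀ k : Fin 24, 4 ≤ k.val →
      (Fin.ofNat 24 (rootParents.getD k (0, 0, 0)).2.1) < k ∧
      (rootParents.getD k (0, 0, 0)).2.2 ≠ 0 ∧
      genBracket ((Fin.ofNat 4 (rootParents.getD k (0, 0, 0)).1).castAdd 4)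
        ((Fin.ofNat 24 (rootParents.getD k (0, 0, 0)).2.1).castLE (by decide)) =
          [(k.castLE (by decide), (rootParents.getD k (0, 0, 0)).2.2)] ∧
      genBracket ((Fin.ofNat 4 (rootParents.getD k (0, 0, 0)).1).natAdd 4)
        (((Fin.ofNat 24 (rootParents.getD k (0, 0, 0)).2.1).natAdd 24).castLE (by decide)) =
        [((k.natAdd 24).castLE (by decide), -(rootParents.getD k (0, 0, 0)).2.2)] := by
    decide
  exact fun k hk => ⟨_, _, (h k hk).1, _, (h k hk).2.1, (h k hk).2.2.1, (h k hk).2.2.2⟩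

/-- A Lie subalgebra containing the Chevalley generators contains the basis. -/
lemma IsModel.basis_mem_of_chevalley_mem (hm : IsModel m) {R : LieSubalgebra ℂ V}
    (hR : ∀ g, chevalley m g ∈ R) (k : Fin 52) : m k ∈ R := by
  have hroot : ∀ k : Fin 24, m (k.castLE (by decide)) ∈ R ∧
      m ((k.natAdd 24).castLE (by decide)) ∈ R := by
    intro k
    induction k using WellFoundedLT.induction with
    | ind k ih =>
      by_cases hk : 4 ≤ k.val
      · obtain ⟨i, j, hj, c, hc, h₁, h₂⟩ := genBracket_rootParents k hk
        have hc' : (c : ℂ) ≠ 0 := Int.cast_ne_zero.2 hc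
        have h₁' := R.lie_mem (hR (.E i)) (ih j hj).1
        have h₂' := R.lie_mem (hR (.F i)) (ih j hj).2
        rw [chevalley, hm.lie_basis_gen, h₁, combination_cons, combination_nil, add_zero] at h₁'
        rw [chevalley, hm.lie_basis_gen, h₂, combination_cons, combination_nil, add_zero] at h₂'
        refine ⟨(R.toSubmodule.smul_mem_iff hc').1 h₁', (R.toSubmodule.smul_mem_iff ?_).1 h₂'⟩
        rwa [Int.cast_neg, neg_ne_zero]
      · obtain ⟨i, rfl⟩ : ∃ i : Fin 4, k = i.castLE (by decide) :=
          ⟨⟨k.val, by omega⟩, rfl⟩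
        have hi : ∀ i : Fin 4, gen (i.castAdd 4) =
              (i.castLE (by decide) : Fin 24).castLE (by decide) ∧
            gen (i.natAdd 4) = ((i.castLE (by decide) : Fin 24).natAdd 24).castLE (by decide) := by
          decide
        exact ⟨(hi i).1 ▸ hR (.E i), (hi i).2 ▸ hR (.F i)⟩
  have hcow : ∀ i : Fin 4, m (i.natAdd 48) ∈ R := by
    intro i
    have h : m (i.natAdd 48) = ∑ k, (inverseCartan i k : ℂ) • chevalley m (.H k) := by
      simp only [chevalley, toral, cartan, Finset.smul_sum, smul_smul]
      rw [Finset.sum_comm]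
      simp only [← Finset.sum_smul]
      have h (j : Fin 4) : ∑ k, (inverseCartan i k : ℂ) * (CartanMatrix.F₄ k j : ℂ) =
          if i = j then 1 else 0 := by
        have := congrFun (congrFun inverseCartan_mul i) j
        rw [Matrix.mul_apply, Matrix.one_apply] at this
        exact_mod_cast this
      simp [h]
    rw [h]
    exact sum_mem fun k _ => R.smul_mem _ (hR (.H k))
  by_cases h₁ : k.val < 24
  · exact (hroot ⟨k.val, h₁⟩).1
  · by_cases h₂ : k.val < 48
    · convert (hroot ⟨k.val - 24, by omega⟩).2
      ext
      simp
      omega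
    · convert hcow ⟨k.val - 48, by omega⟩
      ext
      simp
      omega

end model

/-- The basis matrices as endomorphisms. -/
noncomputable def basisEnd (k : Fin 52) : Module.End ℂ (ℕ →₀ ℂ) := (basisMatrix k).toEnd

lemma toEnd_combMatrix (w : Comb) : (combMatrix w).toEnd = combination basisEnd w := by
  induction w with
  | nil => rfl
  | cons p w ih =>
    rw [combination_cons, ← ih, combMatrix, List.fold_cons, SparseMatrix.toEnd_append,
      SparseMatrix.toEnd_smul]
    rfl

/-- The coordinate functions as linear forms on endomorphisms. -/
noncomputable def coordEnd (k : Fin 52) : Module.End ℂ (ℕ →₀ ℂ) →ₗ[ℂ] ℂ :=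
  ((coordEntries k.val).map fun p => (p.2.2 : ℂ) •
    (Finsupp.lapply p.1 ∘ₗ LinearMap.applyₗ (Finsupp.single p.2.1 (1 : ℂ)))).sum

lemma coordEnd_toEnd (k : Fin 52) (A : SparseMatrix) : coordEnd k A.toEnd = coord k A := by
  rw [coordEnd, coord]
  induction coordEntries k.val with
  | nil => simp
  | cons p l ih =>
    rw [List.map_cons, List.sum_cons, LinearMap.add_apply, ih, List.fold_cons, Int.cast_add,
      Int.cast_mul, ← SparseMatrix.toEnd_apply]
    rfl

lemma linearIndependent_of_dual_family {ι R M : Type*} [Fintype ι] [DecidableEq ι] [Semiring R]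
    [AddCommMonoid M] [Module R M] (v : ι → M) (f : ι → M →ₗ[R] R)
    (h : ∀ k l, f k (v l) = if k = l then 1 else 0) : LinearIndependent R v := by
  refine Fintype.linearIndependent_iffₛ.2 fun g g' hg k => ?_
  simpa [h] using congrArg (f k) hg

lemma linearIndependent_basisEnd : LinearIndependent ℂ basisEnd :=
  linearIndependent_of_dual_family _ coordEnd fun k l => by
    rw [basisEnd, coordEnd_toEnd, coord_basisMatrix]
    split_ifs <;> simp

section
attribute [local instance] LieRing.ofAssociativeRing

lemma isModel_basisEnd : IsModel basisEnd := by
  intro u v w h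
  have := SparseMatrix.toEnd_eq_zero h
  rw [SparseMatrix.toEnd_append, SparseMatrix.toEnd_bracket, SparseMatrix.toEnd_smul,
    toEnd_combMatrix, toEnd_combMatrix, toEnd_combMatrix] at this
  rw [← sub_eq_zero]
  refine Eq.trans ?_ this
  push_cast
  module

variable {L : Type*} [LieRing L] [LieAlgebra ℂ L]

/-- A simple Lie algebra of type `F₄` has a basis satisfying the bracket relations of the basis
matrices. -/
theorem exists_isModel_basis [LieAlgebra.IsSimple ℂ L] (φ : L ≃ₗ⁅ℂ⁆ f₄ ℂ) :
    ∃ b : Basis (Fin 52) ℂ L, IsModel b := by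
  let ρ : L →ₗ⁅ℂ⁆ Module.End ℂ (ℕ →₀ ℂ) := isModel_basisEnd.serreRep.comp φ.toLieHom
  have hrange : Set.range ρ = Set.range (freeRep basisEnd) := by
    rw [← isModel_basisEnd.range_serreRep]
    exact φ.surjective.range_comp isModel_basisEnd.serreRep
  have hmem (k : Fin 52) : basisEnd k ∈ Set.range ρ := by
    refine isModel_basisEnd.basis_mem_of_chevalley_mem (R := ρ.range) (fun g => ?_) k
    change chevalley basisEnd g ∈ Set.range ρ
    rw [hrange]
    exact ⟨_, freeRep_of g⟩
  choose m hm using hmem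
  have hker : ρ.ker = ⊥ := by
    refine (LieAlgebra.IsSimple.eq_bot_or_eq_top (R := ℂ) ρ.ker).resolve_right fun h => ?_
    have h0 : m 0 ∈ ρ.ker := h ▸ LieSubmodule.mem_top _
    exact linearIndependent_basisEnd.ne_zero 0 ((hm 0).symm.trans (LieHom.mem_ker.1 h0))
  have hinj : Function.Injective ρ := (LieHom.ker_eq_bot ρ).1 hker
  have hρm : (fun k => ρ.toLinearMap (m k)) = basisEnd := funext hm
  have hli : LinearIndependent ℂ m := by
    refine LinearIndependent.of_comp ρ.toLinearMap ?_
    rw [show ⇑ρ.toLinearMap ∘ m = basisEnd from hρm]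
    exact linearIndependent_basisEnd
  refine ⟨Basis.mk hli fun x _ => ?_, fun u v w h => hinj ?_⟩
  · obtain ⟨y, hy⟩ : ρ x ∈ Set.range (freeRep basisEnd) := hrange ▸ ⟨x, rfl⟩
    have hx : ρ.toLinearMap x ∈ (Submodule.span ℂ (Set.range m)).map ρ.toLinearMap := by
      rw [Submodule.map_span, ← Set.range_comp, show ⇑ρ.toLinearMap ∘ m = basisEnd from hρm]
      exact hy ▸ isModel_basisEnd.freeRep_mem_span y
    obtain ⟨z, hz, hzx⟩ := hx
    exact hinj hzx ▸ hz
  · rw [Basis.coe_mk, LieHom.map_lie]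
    have hc (w : Comb) : ρ (combination m w) = combination basisEnd w := by
      rw [← hρm]
      exact map_combination ρ.toLinearMap m w
    rw [hc, hc, hc]
    exact isModel_basisEnd u v w h

end

end F4Model
end

section
open LieAlgebra LieSubalgebra Module

section reflection
variable {L : Type*} [LieRing L] [LieAlgebra ℂ L] [FiniteDimensional ℂ L]

lemma exists_aut_reflection {s h e f : L} {c : ℂ} (hef : ⁅e, f⁆ = h) (he : ⁅h, e⁆ = (2 : ℂ) • e)
    (hf : ⁅h, f⁆ = (-2 : ℂ) • f) (hse : ⁅s, e⁆ = c • e) (hsf : ⁅s, f⁆ = (-c) • f) :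
    ∃ φ : L ≃ₗ⁅ℂ⁆ L, φ s = s - c • h := by
  let u : L := (Real.pi / 2 : ℂ) • (e - f)
  have heh : ⁅e, h⁆ = (-2 : ℂ) • e := by rw [← lie_skew, he, neg_smul]
  have hfh : ⁅f, h⁆ = (2 : ℂ) • f := by rw [← lie_skew, hf, neg_smul, neg_neg]
  have hes : ⁅e, s⁆ = (-c) • e := by rw [← lie_skew, hse, neg_smul]
  have hfs : ⁅f, s⁆ = c • f := by rw [← lie_skew, hsf, neg_smul, neg_neg]
  have hfe : ⁅f, e⁆ = -h := by rw [← lie_skew, hef]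
  have heig (a : ℂ) (ha : a * a = -1) : ⁅u, h + a • (e + f)⁆ =
      (a * Real.pi) • (h + a • (e + f)) := by
    have h2 : a * Real.pi * a = -Real.pi := by linear_combination Real.pi * ha
    simp only [u, smul_lie, sub_lie, lie_add, lie_smul, lie_self, heh, hfh, hef, hfe, smul_add,
      smul_smul, h2]
    module
  have hexp (a : ℂ) (ha : a = Complex.I ∨ a = -Complex.I) :
      expAut u (h + a • (e + f)) = -(h + a • (e + f)) := by
    rw [expAut_apply_eigenvector (heig a (by rcases ha with rfl | rfl <;> simp))]
    have : Complex.exp (a * Real.pi) = -1 := by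
      rcases ha with rfl | rfl
      · rw [mul_comm, Complex.exp_pi_mul_I]
      · rw [neg_mul, Complex.exp_neg, mul_comm, Complex.exp_pi_mul_I]
        norm_num
    rw [this, neg_one_smul]
  have hh : expAut u h = -h := by
    have hdec : h = (1 / 2 : ℂ) • ((h + Complex.I • (e + f)) + (h + (-Complex.I) • (e + f))) := by
      module
    have h0 := congrArg (expAut u) hdec
    rw [map_smul, map_add, hexp _ (.inl rfl), hexp _ (.inr rfl)] at h0
    rw [h0]
    module
  have hfix : expAut u (s - (c / 2) • h) = s - (c / 2) • h := by
    apply expAut_apply_of_lie_eq_zero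
    simp only [u, smul_lie, sub_lie, lie_sub, lie_smul, heh, hfh, hes, hfs, smul_smul]
    module
  refine ⟨expAut u, ?_⟩
  rw [map_sub, map_smul, hh] at hfix
  have := eq_sub_of_add_eq (sub_eq_add_neg _ ((c / 2) • -h) ▸ hfix :
    expAut u s + -((c / 2) • -h) = _)
  rw [this]
  module

end reflection

namespace F4Model
variable {L : Type*} [LieRing L] [LieAlgebra ℂ L]

lemma IsModel.map {m : Fin 52 → L} (hm : IsModel m) (φ : L ≃ₗ⁅ℂ⁆ L) : IsModel (φ ∘ m) := by
  intro u v w h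
  have hc (w : Comb) : combination (φ ∘ m) w = φ (combination m w) :=
    (map_combination φ.toLinearEquiv.toLinearMap m w).symm
  rw [hc, hc, hc, ← LieEquiv.map_lie, hm u v w h]

lemma map_toral (m : Fin 52 → L) (φ : L ≃ₗ⁅ℂ⁆ L) (n : Fin 4 → ℂ) :
    φ (toral m n) = toral (φ ∘ m) n := by
  simp [toral]

lemma toral_sub_smul (m : Fin 52 → L) (n n' : Fin 4 → ℂ) (c : ℂ) :
    toral m n - c • toral m n' = toral m (n - c • n') := by
  simp [toral, Finset.smul_sum, sub_smul, mul_smul]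

lemma IsModel.lie_toral_int {m : Fin 52 → L} (hm : IsModel m) (n : Fin 4 → ℤ) (k : Fin 52) :
    ⁅toral m fun i => (n i : ℂ), m k⁆ = (weightAt n k : ℂ) • m k := by
  rw [hm.lie_toral_basis, sum_mul_weight]

lemma weightAt_one : ∀ k : Fin 48, weightAt (fun _ => 1) (k.castAdd 4) ≠ 0 := by decide

lemma weightAt_gen (n : Fin 4 → ℤ) (i : Fin 4) :
    weightAt n (gen (i.castAdd 4)) = n i ∧ weightAt n (gen (i.natAdd 4)) = -n i := by
  fin_cases i <;> simp [weightAt, gen, weight, posRoots]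

/-- The pairing of a coweight with the sum of the positive roots. -/
def height (n : Fin 4 → ℤ) : ℤ := 22 * n 0 + 42 * n 1 + 30 * n 2 + 16 * n 3

lemma height_cartan : ∀ i : Fin 4, height (cartan i) = 2 := by decide

lemma IsModel.lie_gen {m : Fin 52 → L} (hm : IsModel m) (i : Fin 4) :
    ⁅m (gen (i.castAdd 4)), m (gen (i.natAdd 4))⁆ = toral m fun j => (cartan i j : ℂ) := by
  have h := hm.lie_basis_gen (i.castAdd 4) (gen (i.natAdd 4))
  rw [genBracket_E_F, if_pos rfl] at h
  rw [h, combination_filter]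
  simp only [combination, List.map_map, Function.comp_def, toral, Fin.sum_univ_def]

variable [FiniteDimensional ℂ L]

lemma exists_aut_simple_reflection {m : Fin 52 → L} (hm : IsModel m) (n : Fin 4 → ℤ) (i : Fin 4) :
    ∃ φ : L ≃ₗ⁅ℂ⁆ L, toral m (fun j => (n j : ℂ)) =
      toral (φ ∘ m) fun j => ((n j - n i * cartan i j : ℤ) : ℂ) := by
  have hc : cartan i i = 2 := by revert i; decide
  obtain ⟨φ, hφ⟩ := exists_aut_reflection (s := toral m fun j => (n j : ℂ)) (c := n i)
    (hm.lie_gen i)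
    (by rw [hm.lie_toral_int, (weightAt_cartan i i).1, hc]; norm_num)
    (by rw [hm.lie_toral_int, (weightAt_cartan i i).2, hc]; norm_num)
    (by rw [hm.lie_toral_int, (weightAt_gen n i).1])
    (by rw [hm.lie_toral_int, (weightAt_gen n i).2]; norm_num)
  refine ⟨φ.symm, ?_⟩
  rw [← map_toral, LieEquiv.eq_symm_apply, hφ, toral_sub_smul]
  congr 1
  ext j
  simp

omit [FiniteDimensional ℂ L] in
lemma mem_engel_toral_one {b : Basis (Fin 52) ℂ L} (hb : IsModel b) (x : L) :
    x ∈ engel ℂ (toral b fun _ => (1 : ℂ)) ↔ ∃ n : Fin 4 → ℂ, x = toral b n := by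
  constructor
  · intro hx
    obtain ⟨j, hj⟩ := (mem_engel_iff ℂ _ _).1 hx
    have hwt (k : Fin 52) := hb.lie_toral_int (fun _ => 1) k
    simp only [Int.cast_one] at hwt
    have hpow : ∀ (j : ℕ) (k : Fin 52), (ad ℂ L (toral b fun _ => (1 : ℂ)) ^ j) (b k) =
        (weightAt (fun _ => 1) k : ℂ) ^ j • b k := by
      intro j k
      induction j with
      | zero => simp
      | succ j ih => rw [pow_succ', Module.End.mul_apply, ih, map_smul, ad_apply, hwt, smul_smul,
          pow_succ]
    have hz (k : Fin 52) : b.repr x k * (weightAt (fun _ => 1) k : ℂ) ^ j = 0 := by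
      rw [← b.sum_repr x, map_sum] at hj
      simp only [map_smul, hpow, smul_smul] at hj
      exact Fintype.linearIndependent_iff.1 b.linearIndependent _ hj k
    refine ⟨fun i => b.repr x (i.natAdd 48), ?_⟩
    conv_lhs => rw [← b.sum_repr x]
    rw [Fin.sum_univ_add (a := 48) (b := 4), Finset.sum_eq_zero, zero_add]
    · rfl
    · intro k _
      rw [(mul_eq_zero.1 (hz (k.castAdd 4))).resolve_right
        (pow_ne_zero _ (by exact_mod_cast weightAt_one k)), zero_smul]
  · rintro ⟨n, rfl⟩
    rw [mem_engel_iff]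
    exact ⟨1, by rw [pow_one, ad_apply, hb.lie_toral_toral]⟩

omit [FiniteDimensional ℂ L] in
lemma isCartanSubalgebra_engel_toral {b : Basis (Fin 52) ℂ L} (hb : IsModel b) :
    (engel ℂ (toral b fun _ => (1 : ℂ))).IsCartanSubalgebra := by
  have : IsLieAbelian (engel ℂ (toral b fun _ => (1 : ℂ))) := ⟨fun ⟨x, hx⟩ ⟨y, hy⟩ => by
    obtain ⟨n, rfl⟩ := (mem_engel_toral_one hb x).1 hx
    obtain ⟨n', rfl⟩ := (mem_engel_toral_one hb y).1 hy
    exact Subtype.ext (hb.lie_toral_toral n n')⟩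
  exact ⟨inferInstance, normalizer_engel _ _⟩

variable [LieAlgebra.IsKilling ℂ L]

lemma exists_isModel_eq_toral {b : Basis (Fin 52) ℂ L} (hb : IsModel b) {s : L}
    (hs : (ad ℂ L s).IsSemisimple) :
    ∃ b' : Basis (Fin 52) ℂ L, IsModel b' ∧ ∃ n : Fin 4 → ℂ, s = toral b' n := by
  obtain ⟨y, hy, hsy⟩ := exists_isCartanSubalgebra_engel_mem hs
  obtain ⟨φ, hφ⟩ := exists_aut_engel (isCartanSubalgebra_engel_toral hb) hy
  have h1 : φ.symm s ∈ engel ℂ (toral b fun _ => (1 : ℂ)) := by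
    rwa [hφ, LieEquiv.apply_symm_apply]
  obtain ⟨n, hn⟩ := (mem_engel_toral_one hb _).1 h1
  have hcoe : ⇑(b.map φ.toLinearEquiv) = φ ∘ b := b.coe_map φ.toLinearEquiv
  refine ⟨b.map φ.toLinearEquiv, ?_, n, ?_⟩
  · rw [hcoe]
    exact hb.map φ
  · rw [hcoe, ← map_toral, ← hn, LieEquiv.apply_symm_apply]

lemma exists_dominant {b : Basis (Fin 52) ℂ L} (hb : IsModel b) {s e : L}
    (hs : (ad ℂ L s).IsSemisimple) (hse : IsNeutral s e) (he : IsNilpotent (ad ℂ L e)) :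
    ∃ b' : Basis (Fin 52) ℂ L, IsModel b' ∧ ∃ n : Fin 4 → ℤ, (s = toral b' fun i => (n i : ℂ)) ∧
      ∀ i, 0 ≤ n i := by
  let S : Set (Fin 4 → ℤ) := {n | ∃ b' : Basis (Fin 52) ℂ L, IsModel b' ∧
    s = toral b' fun i => (n i : ℂ)}
  have hne : S.Nonempty := by
    obtain ⟨b', hb', n, hn⟩ := exists_isModel_eq_toral hb hs
    have hint (i : Fin 4) : ∃ k : ℤ, n i = k := by
      have h : ⁅s, b' (gen (i.castAdd 4))⁆ = n i • b' (gen (i.castAdd 4)) := by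
        rw [hn, hb'.lie_toral_basis]
        congr 1
        fin_cases i <;> simp [gen, weight, posRoots, Fin.sum_univ_four]
      exact hse.exists_int he (b'.ne_zero _) h
    choose k hk using hint
    exact ⟨k, b', hb', by rw [hn]; congr 1; ext i; exact hk i⟩
  have hfin : S.Finite := by
    refine ((Set.Finite.pi' fun _ : Fin 4 => ((ad ℂ L s).finite_hasEigenvalue.preimage
      (f := fun k : ℤ => (k : ℂ)) (Int.cast_injective.injOn)))).subset ?_
    rintro n ⟨b', hb', hn⟩ i
    refine Module.End.hasEigenvalue_of_hasEigenvector (x := b' (gen (i.castAdd 4)))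
      ⟨Module.End.mem_eigenspace_iff.2 ?_, b'.ne_zero _⟩
    rw [ad_apply, hn, hb'.lie_toral_int, (weightAt_gen n i).1]
  obtain ⟨n, ⟨b', hb', hn⟩, hmax⟩ := Set.exists_max_image S height hfin hne
  refine ⟨b', hb', n, hn, fun i => ?_⟩
  by_contra hi
  obtain ⟨φ, hφ⟩ := exists_aut_simple_reflection hb' n i
  have hcoe : ⇑(b'.map φ.toLinearEquiv) = φ ∘ b' := b'.coe_map φ.toLinearEquiv
  have h := hmax (fun j => n j - n i * cartan i j) ⟨b'.map φ.toLinearEquiv,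
    by rw [hcoe]; exact hb'.map φ, by rw [hcoe, ← hφ, hn]⟩
  have hc := height_cartan i
  simp only [height] at h hc
  nlinarith

end F4Model
end

section
open LieAlgebra LieSubalgebra Module

section
variable {L : Type*} [LieRing L] [LieAlgebra ℂ L] [FiniteDimensional ℂ L]
  {ι : Type*} [Fintype ι] {b : Basis ι ℂ L} {wt : ι → ℤ} {s e : L}

omit [FiniteDimensional ℂ L] in
lemma eq_sum_of_mem_adEig (hwt : ∀ i, ⁅s, b i⁆ = (wt i : ℂ) • b i) {c : ℤ} {x : L}
    (hx : x ∈ adEig s (c : ℂ)) :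
    x = ∑ i ∈ Finset.univ.filter (fun i => wt i = c), b.repr x i • b i := by
  conv_lhs => rw [← b.sum_repr x]
  rw [Finset.sum_filter]
  refine Finset.sum_congr rfl fun i _ => ?_
  split_ifs with h
  · rfl
  · rw [repr_eq_zero_of_mem_adEig hwt hx (by exact_mod_cast h), zero_smul]

lemma IsNeutral.eq_zero_of_card_eq [LieAlgebra.IsKilling ℂ L]
    (hwt : ∀ i, ⁅s, b i⁆ = (wt i : ℂ) • b i) (hs : IsNeutral s e) {c : ℤ} (hc : 1 ≤ c)
    (hcard : (Finset.univ.filter fun i => wt i = c).card =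
      (Finset.univ.filter fun i => wt i = c - 2).card) {x : L}
    (hx : x ∈ adEig s ((c - 2 : ℤ) : ℂ)) (hex : ⁅e, x⁆ = 0) : x = 0 := by
  have h1 := LinearMap.finrank_range_add_finrank_ker
    ((ad ℂ L e).domRestrict (adEig s ((c - 2 : ℤ) : ℂ)))
  have h2 : finrank ℂ (adEig s ((c - 2 : ℤ) : ℂ)) ≤
      finrank ℂ (LinearMap.range ((ad ℂ L e).domRestrict (adEig s ((c - 2 : ℤ) : ℂ)))) := by
    rw [adEig_eq_span hwt, finrank_span_image_basis, ← hcard, ← finrank_span_image_basis (b := b),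
      ← adEig_eq_span hwt, ← adEig_eq_span hwt]
    refine Submodule.finrank_mono fun t ht => ?_
    obtain ⟨u, hu, rfl⟩ := hs.exists_lie_eq hwt hc ht
    exact ⟨⟨u, hu⟩, rfl⟩
  have h3 : LinearMap.ker ((ad ℂ L e).domRestrict (adEig s ((c - 2 : ℤ) : ℂ))) = ⊥ :=
    Submodule.finrank_eq_zero.1 (by omega)
  have h4 : (⟨x, hx⟩ : adEig s ((c - 2 : ℤ) : ℂ)) ∈
      LinearMap.ker ((ad ℂ L e).domRestrict (adEig s ((c - 2 : ℤ) : ℂ))) := hex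
  rw [h3, Submodule.mem_bot] at h4
  exact congrArg Subtype.val h4
end

namespace F4Model

/-- The number of basis vectors whose weight at a coweight satisfies a given condition. -/
abbrev weightCard (n : Fin 4 → ℤ) (p : ℤ → Prop) [DecidablePred p] : ℕ :=
  (Finset.univ.filter fun k => p (weightAt n k)).card

lemma dominant_cases : ∀ a b c d : Fin 3,
    12 + weightCard ![(a.val : ℤ), b.val, c.val, d.val] (2 ≤ ·) =
      weightCard ![(a.val : ℤ), b.val, c.val, d.val] (0 ≤ ·) →
    weightCard ![(a.val : ℤ), b.val, c.val, d.val] (· = 3) ≤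
      weightCard ![(a.val : ℤ), b.val, c.val, d.val] (· = 3 - 2) →
    weightCard ![(a.val : ℤ), b.val, c.val, d.val] (· = 4) ≤
      weightCard ![(a.val : ℤ), b.val, c.val, d.val] (· = 4 - 2) →
    ![(a.val : ℤ), b.val, c.val, d.val] = ![0, 0, 2, 0] ∨
    ![(a.val : ℤ), b.val, c.val, d.val] = ![1, 0, 1, 1] ∨
    ![(a.val : ℤ), b.val, c.val, d.val] = ![2, 0, 0, 2] := by
  decide +kernel

lemma weight_sign : ∀ k : Fin 52, ∀ i : Fin 4, (k.val < 24 → 0 ≤ (weight k).getD i 0) ∧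
    (24 ≤ k.val → (weight k).getD i 0 ≤ 0) := by
  decide +kernel

lemma genBracket_lt : ∀ (i : Fin 4) (k : Fin 52), k.val < 24 → k ≠ gen (i.castAdd 4) →
    ∀ p ∈ genBracket (i.natAdd 4) k, p.1.val < 24 := by
  decide +kernel

lemma weightAt_nonneg {n : Fin 4 → ℤ} (hn : ∀ i, 0 ≤ n i) {k : Fin 52} (hk : k.val < 24) :
    0 ≤ weightAt n k := by
  have h (i : Fin 4) := mul_nonneg (hn i) ((weight_sign k i).1 hk)
  have h0 := h 0
  have h1 := h 1
  have h2 := h 2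
  have h3 := h 3
  simp only [weightAt]
  exact add_nonneg (add_nonneg (add_nonneg h0 h1) h2) h3

lemma weightAt_nonpos {n : Fin 4 → ℤ} (hn : ∀ i, 0 ≤ n i) {k : Fin 52} (hk : 24 ≤ k.val) :
    weightAt n k ≤ 0 := by
  have h (i : Fin 4) := mul_nonpos_of_nonneg_of_nonpos (hn i) ((weight_sign k i).2 hk)
  have h0 := h 0
  have h1 := h 1
  have h2 := h 2
  have h3 := h 3
  simp only [weightAt]
  exact add_nonpos (add_nonpos (add_nonpos h0 h1) h2) h3

variable {L : Type*} [LieRing L] [LieAlgebra ℂ L]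

lemma IsModel.lie_basis {m : Fin 52 → L} (hm : IsModel m) {i j : Fin 52} {w : Comb}
    (h : lieCheck [(i, 1)] [(j, 1)] w = true) : ⁅m i, m j⁆ = combination m w := by
  simpa using hm _ _ _ h

lemma le_two {b : Basis (Fin 52) ℂ L} (hb : IsModel b) {s e : L} {n : Fin 4 → ℤ}
    (hs : s = toral b fun i => (n i : ℂ)) (hn : ∀ i, 0 ≤ n i) (hse : IsNeutral s e) (i : Fin 4) :
    n i ≤ 2 := by
  by_contra! hi
  have hwt (k : Fin 52) : ⁅s, b k⁆ = (weightAt n k : ℂ) • b k := hs ▸ hb.lie_toral_int n k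
  have hF : b (gen (i.natAdd 4)) ∈ adEig s ((-n i : ℤ) : ℂ) := by
    rw [mem_adEig, hwt, (weightAt_gen n i).2]
  have h2 : e ∈ adEig s ((2 : ℤ) : ℂ) := mem_adEig.2 (by simpa using hse.lie_eq)
  have hlie : ⁅e, b (gen (i.natAdd 4))⁆ ∈ adEig s ((2 - n i : ℤ) : ℂ) :=
    lie_mem_adEig h2 hF (by push_cast; ring)
  let P := Submodule.span ℂ (b '' {k | k.val < 24})
  have hmem : ⁅e, b (gen (i.natAdd 4))⁆ ∈ P := by
    rw [eq_sum_of_mem_adEig hwt h2, sum_lie]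
    refine Submodule.sum_mem _ fun k hk => ?_
    replace hk : weightAt n k = 2 := (Finset.mem_filter.1 hk).2
    rw [smul_lie, ← lie_skew, hb.lie_basis_gen]
    refine Submodule.smul_mem _ _ (Submodule.neg_mem _ (combination_mem fun p hp => ?_))
    refine Submodule.subset_span ⟨_, genBracket_lt i k ?_ ?_ p hp, rfl⟩
    · by_contra! hk'
      have := weightAt_nonpos hn hk'
      omega
    · rintro rfl
      rw [(weightAt_gen n i).1] at hk
      omega
  have hzero : ⁅e, b (gen (i.natAdd 4))⁆ = 0 := by
    rw [eq_sum_of_mem_adEig hwt hlie]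
    refine Finset.sum_eq_zero fun k hk => ?_
    replace hk : weightAt n k = 2 - n i := (Finset.mem_filter.1 hk).2
    have : k ∉ (b.repr ⁅e, b (gen (i.natAdd 4))⁆).support := fun h => by
      have := weightAt_nonneg hn (b.mem_span_image.1 hmem h)
      omega
    rw [Finsupp.notMem_support_iff.1 this, zero_smul]
  exact b.ne_zero _ (hse.eq_zero_of_neg (by omega) hF hzero)

/-- The basis vectors of weight `2` for the coweight `(1, 0, 1, 1)`. -/
def levelOdd : Fin 5 → Fin 52 := ![6, 7, 9, 10, 12]

lemma filter_levelOdd : (Finset.univ.filter fun k => weightAt ![1, 0, 1, 1] k = 2) =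
    Finset.univ.map ⟨levelOdd, by decide⟩ := by
  decide +kernel

lemma lieCheck_levelOdd : ∀ i, lieCheck [(levelOdd i, 1)] [(40, 1)] [] = true := by
  decide +kernel

lemma ne_odd {b : Basis (Fin 52) ℂ L} (hb : IsModel b) {s e : L}
    (hs : s = toral b fun i => ((![1, 0, 1, 1] : Fin 4 → ℤ) i : ℂ)) (hse : IsNeutral s e) :
    False := by
  have hwt (k : Fin 52) := hs ▸ hb.lie_toral_int _ k
  have h2 : e ∈ adEig s ((2 : ℤ) : ℂ) := mem_adEig.2 (by simpa using hse.lie_eq)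
  refine b.ne_zero 40 (hse.eq_zero_of_neg (c := -4) (by norm_num) ?_ ?_)
  · rw [mem_adEig, hwt, show weightAt ![1, 0, 1, 1] 40 = -4 by decide]
  · rw [eq_sum_of_mem_adEig hwt h2, filter_levelOdd, Finset.sum_map, sum_lie]
    refine Finset.sum_eq_zero fun i _ => ?_
    have h := hb.lie_basis (lieCheck_levelOdd i)
    rw [smul_lie]
    change _ • ⁅b (levelOdd i), b 40⁆ = 0
    rw [h, combination_nil, smul_zero]

/-- The basis vectors of weight `2` for the coweight `(2, 0, 0, 2)`. -/
def levelEven : Fin 9 → Fin 52 := ![0, 4, 7, 10, 3, 6, 9, 12, 15]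

/-- The brackets of the basis vectors of weight `2` and four basis vectors of weight `4`. -/
def levelEvenBracket : Fin 4 → Fin 9 → Comb :=
  ![![[], [(16, -2)], [(18, 2)], [(20, 1)], [], [], [], [], []],
    ![[(16, 2)], [], [(20, -1)], [(21, -2)], [], [], [], [], []],
    ![[(18, 2)], [(20, -1)], [], [(22, -2)], [], [], [], [], []],
    ![[(20, 1)], [(21, -2)], [(22, 2)], [], [], [], [], [], []]]

lemma filter_levelEven : (Finset.univ.filter fun k => weightAt ![2, 0, 0, 2] k = 2) =
    Finset.univ.map ⟨levelEven, by decide⟩ := by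
  decide +kernel

lemma lieCheck_levelEven : ∀ i j, lieCheck [(levelEven i, 1)] [(![11, 14, 17, 19] j, 1)]
    (levelEvenBracket j i) = true := by
  decide +kernel

lemma card_levelEven : (Finset.univ.filter fun k => weightAt ![2, 0, 0, 2] k = 6).card =
    (Finset.univ.filter fun k => weightAt ![2, 0, 0, 2] k = 6 - 2).card := by
  decide +kernel

variable [FiniteDimensional ℂ L] [LieAlgebra.IsKilling ℂ L]

lemma ne_even {b : Basis (Fin 52) ℂ L} (hb : IsModel b) {s e : L}
    (hs : s = toral b fun i => ((![2, 0, 0, 2] : Fin 4 → ℤ) i : ℂ)) (hse : IsNeutral s e) :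
    False := by
  have hwt (k : Fin 52) := hs ▸ hb.lie_toral_int _ k
  have h2 : e ∈ adEig s ((2 : ℤ) : ℂ) := mem_adEig.2 (by simpa using hse.lie_eq)
  obtain ⟨r, hr⟩ : ∃ r : Fin 9 → ℂ, e = ∑ i, r i • b (levelEven i) := by
    refine ⟨fun i => b.repr e (levelEven i), ?_⟩
    conv_lhs => rw [eq_sum_of_mem_adEig hwt h2, filter_levelEven, Finset.sum_map]
    rfl
  have key (y : Fin 4 → ℂ) (hy : ⁅e, ∑ j, y j • b (![11, 14, 17, 19] j)⁆ = 0) (j : Fin 4) :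
      y j = 0 := by
    have h0 : ∑ j, y j • b (![11, 14, 17, 19] j) = 0 := by
      refine hse.eq_zero_of_card_eq hwt (c := 6) (by norm_num) card_levelEven
        (Submodule.sum_mem _ fun j _ => Submodule.smul_mem _ _ (mem_adEig.2 ?_)) hy
      rw [hwt]
      congr 2
      revert j
      decide
    have hli := b.linearIndependent.comp (![11, 14, 17, 19] : Fin 4 → Fin 52) (by decide)
    exact Fintype.linearIndependent_iff.1 hli y h0 j
  have hlie (y : Fin 4 → ℂ) : ⁅e, ∑ j, y j • b (![11, 14, 17, 19] j)⁆ =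
      ∑ j, y j • ∑ i, r i • combination b (levelEvenBracket j i) := by
    rw [hr]
    simp only [sum_lie, lie_sum, smul_lie, lie_smul, hb.lie_basis (lieCheck_levelEven _ _)]
  have h1 := key ![r 0, r 1, -r 2, -r 3] (by
    rw [hlie]
    simp [Fin.sum_univ_succ, levelEvenBracket]
    module)
  have h3 := key ![1, 0, 0, 0] (by
    rw [hlie]
    have h10 := h1 0
    have h11 := h1 1
    have h12 := h1 2
    have h13 := h1 3
    simp at h10 h11 h12 h13
    simp [Fin.sum_univ_succ, levelEvenBracket, h10, h11, h12, h13]) 0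
  simp at h3

lemma exists_eq_toral {b : Basis (Fin 52) ℂ L} (hb : IsModel b) {s e : L}
    (hs : (ad ℂ L s).IsSemisimple) (hse : IsNeutral s e) (he : IsNilpotent (ad ℂ L e))
    (hdim : finrank ℂ (LinearMap.ker (ad ℂ L e)) = 12) :
    ∃ b' : Basis (Fin 52) ℂ L, IsModel b' ∧
      s = toral b' fun i => ((![0, 0, 2, 0] : Fin 4 → ℤ) i : ℂ) := by
  obtain ⟨b', hb', n, hn, hpos⟩ := exists_dominant hb hs hse he
  refine ⟨b', hb', ?_⟩
  have hle := le_two hb' hn hpos hse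
  have hwt (k : Fin 52) := hn ▸ hb'.lie_toral_int _ k
  have hfin (i : Fin 4) : ∃ a : Fin 3, n i = a.val :=
    ⟨⟨(n i).toNat, by have := hpos i; have := hle i; omega⟩, by have := hpos i; simp [this]⟩
  obtain ⟨a₀, h₀⟩ := hfin 0
  obtain ⟨a₁, h₁⟩ := hfin 1
  obtain ⟨a₂, h₂⟩ := hfin 2
  obtain ⟨a₃, h₃⟩ := hfin 3
  have hn' : n = ![(a₀.val : ℤ), a₁.val, a₂.val, a₃.val] := by
    ext i
    fin_cases i <;> assumption
  have hcard := hse.finrank_ker_add_card hwt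
  have hc3 := hse.card_le hwt (c := 3) (by norm_num)
  have hc4 := hse.card_le hwt (c := 4) (by norm_num)
  rw [hdim] at hcard
  subst hn'
  rcases dominant_cases a₀ a₁ a₂ a₃ hcard hc3 hc4 with h | h | h
  · rw [hn, h]
  · exact (ne_odd hb' (h ▸ hn) hse).elim
  · exact (ne_even hb' (h ▸ hn) hse).elim

/-- The coweight which is the neutral element of the distinguished triple. -/
def neutralCoweight : Fin 4 → ℤ := ![0, 0, 2, 0]

/-- A nilpotent element of the open orbit in degree `2`. -/
def nilpotentComb : Comb := [(2, 1), (8, 1), (12, 1), (16, 1)]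

/-- The basis vectors of weight `2` for the neutral coweight. -/
def levelTwo : Fin 12 → Fin 52 := ![2, 5, 6, 7, 8, 9, 10, 11, 12, 13, 14, 16]

/-- Preimages of the basis vectors of weight `2` under the bracket with the nilpotent element. -/
def levelZeroPreimage : Fin 12 → Comb :=
  ![[(49, -1), (50, 2)], [(1, 2)], [(3, -2), (48, -1), (51, 2)], [(4, 2)], [(49, 1), (51, -2)],
    [(1, 2), (25, -2)], [(0, 2), (24, -2)], [(28, -2)], [(48, -1), (51, 2)],
    [(27, 2), (49, -1), (51, 2)], [(24, 2)], [(48, 1)]]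

lemma filter_levelTwo : (Finset.univ.filter fun k => weightAt neutralCoweight k = 2) =
    Finset.univ.map ⟨levelTwo, by decide⟩ := by
  decide +kernel

lemma card_levelTwo : (Finset.univ.filter fun k => weightAt neutralCoweight k = 2).card =
    (Finset.univ.filter fun k => weightAt neutralCoweight k = 2 - 2).card := by
  decide +kernel

lemma lieCheck_levelZeroPreimage : ∀ i, lieCheck (levelZeroPreimage i) nilpotentComb
    [(levelTwo i, 2)] = true := by
  decide +kernel

lemma weightAt_levelZeroPreimage : ∀ i, ∀ p ∈ levelZeroPreimage i,
    weightAt neutralCoweight p.1 = 0 := by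
  decide +kernel

omit [FiniteDimensional ℂ L] [LieAlgebra.IsKilling ℂ L] in
lemma combination_mem_adEig {b : Basis (Fin 52) ℂ L} {s : L} {n : Fin 4 → ℤ}
    (hwt : ∀ k, ⁅s, b k⁆ = (weightAt n k : ℂ) • b k) {w : Comb} {c : ℤ}
    (h : ∀ p ∈ w, weightAt n p.1 = c) : combination b w ∈ adEig s (c : ℂ) :=
  combination_mem fun p hp => mem_adEig.2 (by rw [hwt, h p hp])

theorem exists_normal_form {b : Basis (Fin 52) ℂ L} (hb : IsModel b) {h e f : L}
    (ht : IsSl2Triple h e f) (he : IsNilpotent (ad ℂ L e))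
    (hdim : finrank ℂ (LinearMap.ker (ad ℂ L e)) = 12) :
    ∃ b' : Basis (Fin 52) ℂ L, IsModel b' ∧ (h = toral b' fun i => (neutralCoweight i : ℂ)) ∧
      e = combination b' nilpotentComb ∧ IsNeutral h e := by
  obtain ⟨s, n, rfl, hs, -, hsn, -, hse⟩ := ht.exists_isNeutral
  obtain ⟨b', hb', hs'⟩ := exists_eq_toral hb hs hse he hdim
  have hwt (k : Fin 52) : ⁅s, b' k⁆ = (weightAt neutralCoweight k : ℂ) • b' k :=
    hs' ▸ hb'.lie_toral_int _ k
  have hn : n = 0 := by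
    refine hse.eq_zero_of_card_eq hwt (c := 2) (by norm_num) card_levelTwo
      (mem_adEig.2 (by simpa using hsn)) ?_
    have h1 := ht.lie_h_e_smul ℂ
    rw [add_lie, hse.lie_eq, add_eq_left] at h1
    rw [← lie_skew, h1, neg_zero]
  subst hn
  rw [add_zero] at *
  have he2 : e ∈ adEig s ((2 : ℤ) : ℂ) := mem_adEig.2 (by simpa using hse.lie_eq)
  obtain ⟨φ, hφs, hφe⟩ := exists_aut_of_open_orbits (s := s) (c := ((2 : ℤ) : ℂ))
    (e₁ := combination b' nilpotentComb) (e₂ := e)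
    (combination_mem_adEig hwt (by decide)) he2 (fun t ht => by
      rw [adEig_eq_span hwt] at ht
      have hle : Submodule.span ℂ ((⇑b') '' {k | weightAt neutralCoweight k = 2}) ≤
          (adEig s 0).map ((LieModule.toEnd ℂ L L : L →ₗ[ℂ] Module.End ℂ L).flip
            (combination b' nilpotentComb)) := by
        refine Submodule.span_le.2 ?_
        rintro _ ⟨k, hk, rfl⟩
        have hk' : k ∈ Finset.univ.filter fun k => weightAt neutralCoweight k = 2 :=
          Finset.mem_filter.2 ⟨Finset.mem_univ k, hk⟩
        rw [filter_levelTwo] at hk'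
        obtain ⟨i, -, rfl⟩ := Finset.mem_map.1 hk'
        refine ⟨(1 / 2 : ℂ) • combination b' (levelZeroPreimage i), Submodule.smul_mem _ _ ?_, ?_⟩
        · simpa using combination_mem_adEig hwt (weightAt_levelZeroPreimage i)
        · change ⁅(1 / 2 : ℂ) • combination b' (levelZeroPreimage i), _⁆ = _
          rw [smul_lie, hb' _ _ _ (lieCheck_levelZeroPreimage i)]
          simp
      obtain ⟨u, hu, hut⟩ := hle ht
      exact ⟨u, hu, hut⟩)
    (fun t ht => by
      obtain ⟨u, hu, hut⟩ := hse.exists_lie_eq hwt (c := 2) (by norm_num) ht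
      refine ⟨-u, Submodule.neg_mem _ (by simpa using hu), ?_⟩
      rw [neg_lie, lie_skew, hut])
  have hcoe : ⇑(b'.map φ.toLinearEquiv) = φ ∘ b' := b'.coe_map φ.toLinearEquiv
  refine ⟨b'.map φ.toLinearEquiv, ?_, ?_, ?_, hse⟩
  · rw [hcoe]
    exact hb'.map φ
  · rw [hcoe, ← map_toral, ← hφs]
    exact congrArg φ hs'
  · rw [hcoe, ← hφe]
    exact map_combination φ.toLinearEquiv.toLinearMap b' nilpotentComb

end F4Model
end

section
open LieAlgebra LieSubalgebra Module

namespace F4Model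

/-- The coefficient of a basis vector in a formal combination. -/
def coeffAt (w : Comb) (k : Fin 52) : ℤ := (w.map fun p => if p.1 = k then p.2 else 0).sum

/-- A basis of the centralizer of the distinguished nilpotent element. -/
def centralizerComb : Fin 12 → Comb :=
  ![[(9, 1)], [(10, 1)], [(7, -1), (11, 1)], [(6, 1), (12, 1)], [(8, -1), (13, 1)], nilpotentComb,
    [(17, 1)], [(19, 1)], [(20, 1)], [(15, 1), (18, -1), (21, 1)], [(22, 1)], [(23, 1)]]

/-- A basis vector occurring in exactly one of the basis elements of the centralizer. -/
def pivotIndex : Fin 12 → Fin 52 := ![9, 10, 11, 6, 13, 16, 17, 19, 20, 15, 22, 23]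

/-- Brackets in the centralizer. -/
def centralizerBracket : Fin 4 → Fin 12 → Comb :=
  ![![[], [(19, -1)], [(17, -1)], [], [(20, -1)], [], [], [], [(23, -2)], [], [], []],
    ![[(19, 1)], [], [(20, -1)], [(17, 1)], [], [], [(22, 2)], [], [], [], [], []],
    ![[(17, 1)], [(20, 1)], [], [(19, -1)], [(19, -1)], [], [], [(22, 2), (23, 2)], [], [], [], []],
    ![[], [(17, -1)], [(19, 1)], [], [(15, 1), (18, -1), (21, 1)], [], [], [], [], [(23, 2)], [],
      []]]

/-- A bracket and a basis vector detecting a given basis element of the centralizer. -/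
def centralizerTest : Fin 12 → Fin 4 × Fin 52 :=
  ![(1, 19), (0, 19), (1, 20), (1, 17), (0, 20), (0, 0), (1, 22), (2, 22), (0, 23), (3, 23), (0, 0),
    (0, 0)]

/-- Elements of degree `0` raised by the nilpotent element to highest weight vectors. -/
def levelZeroComb : Fin 3 → Comb :=
  ![[(3, 1), (48, 1), (51, -2)], [(27, -1), (49, 1), (51, -2)], [(50, -1)]]

lemma coeffAt_centralizerComb : ∀ k l, coeffAt (centralizerComb l) (pivotIndex k) =
    if k = l then 1 else 0 := by
  decide +kernel

lemma lieCheck_centralizerComb : ∀ i, lieCheck (centralizerComb i) nilpotentComb [] = true := by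
  decide +kernel

lemma lieCheck_centralizerBracket : ∀ (j : Fin 4) (i : Fin 12),
    lieCheck (centralizerComb i) (centralizerComb (j.castLE (by decide)))
      (centralizerBracket j i) = true := by
  decide +kernel

lemma lieCheck_top : ∀ i, lieCheck [(22, 1)] (centralizerComb i) [] = true ∧
    lieCheck [(23, 1)] (centralizerComb i) [] = true := by
  decide +kernel

lemma coeffAt_centralizerBracket : ∀ i ∉ ({5, 10, 11} : Finset (Fin 12)),
    coeffAt (centralizerBracket (centralizerTest i).1 i) (centralizerTest i).2 ≠ 0 ∧ ∀ j ≠ i,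
      coeffAt (centralizerBracket (centralizerTest i).1 j) (centralizerTest i).2 = 0 := by
  decide +kernel

lemma lieCheck_levelZeroComb : ∀ i : Fin 3, lieCheck nilpotentComb (levelZeroComb i)
    (centralizerComb (![3, 4, 5] i)) = true := by
  decide +kernel

lemma lieCheck_levelZeroComb_top : ∀ i : Fin 3,
    lieCheck (levelZeroComb i) [(22, 1)] (![[(23, 1)], [(22, 2)], [(22, -3)]] i) = true ∧
    lieCheck (levelZeroComb i) [(23, 1)] (![[(23, -2)], [(22, -1)], [(23, -3)]] i) = true := by
  decide +kernel

variable {L : Type*} [LieRing L] [LieAlgebra ℂ L] {b : Basis (Fin 52) ℂ L}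

lemma coord_combination (b : Basis (Fin 52) ℂ L) (w : Comb) (k : Fin 52) :
    b.coord k (combination b w) = coeffAt w k := by
  rw [map_combination]
  induction w with
  | nil => simp [coeffAt]
  | cons p w ih =>
    rw [combination_cons, ih]
    by_cases h : p.1 = k <;> simp [coeffAt, h]

omit [LieAlgebra ℂ L] in
lemma lie_eq_zero_symm {x y : L} (h : ⁅x, y⁆ = 0) : ⁅y, x⁆ = 0 := by
  rw [← lie_skew, h, neg_zero]

variable [FiniteDimensional ℂ L] {h e f : L} (hb : IsModel b)
  (he : e = combination b nilpotentComb)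
include hb he

lemma exists_eq_sum_of_lie_eq_zero (hdim : finrank ℂ (LinearMap.ker (ad ℂ L e)) = 12) {x : L}
    (hx : ⁅x, e⁆ = 0) : ∃ a : Fin 12 → ℂ, x = ∑ i, a i • combination b (centralizerComb i) := by
  have hli : LinearIndependent ℂ fun i => combination b (centralizerComb i) :=
    linearIndependent_of_dual_family _ (fun i => b.coord (pivotIndex i)) fun k l => by
      rw [coord_combination, coeffAt_centralizerComb]
      split_ifs <;> simp
  have hle : Submodule.span ℂ (Set.range fun i => combination b (centralizerComb i)) ≤
      LinearMap.ker (ad ℂ L e) := by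
    refine Submodule.span_le.2 ?_
    rintro _ ⟨i, rfl⟩
    rw [he]
    exact lie_eq_zero_symm (hb _ _ _ (lieCheck_centralizerComb i))
  have heq := Submodule.eq_of_le_of_finrank_eq hle
    (by rw [finrank_span_eq_card hli, hdim, Fintype.card_fin])
  have hmem : x ∈ LinearMap.ker (ad ℂ L e) := lie_eq_zero_symm hx
  rw [← heq, Submodule.mem_span_range_iff_exists_fun] at hmem
  obtain ⟨a, ha⟩ := hmem
  exact ⟨a, ha.symm⟩

lemma inCenterOfCentralizer_iff (hdim : finrank ℂ (LinearMap.ker (ad ℂ L e)) = 12) (z : L) :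
    InCenterOfCentralizer L e z ↔ ∃ r s t : ℂ, z = r • e + s • b 22 + t • b 23 := by
  constructor
  · rintro ⟨hze, hz⟩
    obtain ⟨a, rfl⟩ := exists_eq_sum_of_lie_eq_zero hb he hdim hze
    have hbr (j : Fin 4) : ∑ i, a i • combination b (centralizerBracket j i) = 0 := by
      have h1 := hz (combination b (centralizerComb (j.castLE (by decide))))
        (he ▸ hb _ _ _ (lieCheck_centralizerComb _))
      rw [sum_lie] at h1
      rw [← h1]
      exact Finset.sum_congr rfl fun i _ => by
        rw [smul_lie, hb _ _ _ (lieCheck_centralizerBracket j i)]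
    have ha (i : Fin 12) (hi : i ∉ ({5, 10, 11} : Finset (Fin 12))) : a i = 0 := by
      obtain ⟨h1, h2⟩ := coeffAt_centralizerBracket i hi
      have h3 := congrArg (b.coord (centralizerTest i).2) (hbr (centralizerTest i).1)
      simp only [map_sum, map_smul, map_zero, smul_eq_mul, coord_combination] at h3
      rw [Finset.sum_eq_single i (fun j _ hj => by rw [h2 j hj, Int.cast_zero, mul_zero])
        (by simp)] at h3
      exact (mul_eq_zero.1 h3).resolve_right (by exact_mod_cast h1)
    refine ⟨a 5, a 10, a 11, ?_⟩
    rw [← Finset.sum_subset (Finset.subset_univ ({5, 10, 11} : Finset (Fin 12)))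
      fun i _ hi => by rw [ha i hi, zero_smul]]
    rw [Finset.sum_insert (by decide), Finset.sum_insert (by decide), Finset.sum_singleton, he,
      add_assoc]
    simp [centralizerComb, combination]
  · rintro ⟨r, s, t, rfl⟩
    have h22 (y : L) (hy : ⁅y, e⁆ = 0) : ⁅b 22, y⁆ = 0 ∧ ⁅b 23, y⁆ = 0 := by
      obtain ⟨a, rfl⟩ := exists_eq_sum_of_lie_eq_zero hb he hdim hy
      have h1 (i : Fin 12) := hb _ _ _ (lieCheck_top i).1
      have h2 (i : Fin 12) := hb _ _ _ (lieCheck_top i).2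
      simp only [combination_cons, combination_nil, Int.cast_one, one_smul, add_zero] at h1 h2
      simp [lie_sum, h1, h2]
    have hz (y : L) (hy : ⁅y, e⁆ = 0) : ⁅r • e + s • b 22 + t • b 23, y⁆ = 0 := by
      simp [lie_eq_zero_symm hy, h22 y hy]
    exact ⟨hz e (lie_self e), hz⟩

omit hb [FiniteDimensional ℂ L] in
lemma linearIndependent_center : LinearIndependent ℂ ![e, b 22, b 23] := by
  refine linearIndependent_of_dual_family _
    (fun i : Fin 3 => b.coord (![2, 22, 23] i)) fun k l => ?_
  have he' (k : Fin 52) := coord_combination b nilpotentComb k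
  rw [← he] at he'
  fin_cases k <;> fin_cases l <;> simp [-Basis.coord_apply, he', coeffAt, nilpotentComb] <;> simp

end F4Model
end

section
open LieAlgebra LieSubalgebra Module

namespace F4Model

lemma weightAt_top : weightAt neutralCoweight 22 = 6 ∧ weightAt neutralCoweight 23 = 6 := by
  decide +kernel

lemma weightAt_ne_ten : ∀ k, weightAt neutralCoweight k ≠ 10 := by
  decide +kernel

lemma weightAt_levelZeroComb : ∀ i, ∀ p ∈ levelZeroComb i, weightAt neutralCoweight p.1 = 0 := by
  decide +kernel

variable {L : Type*} [LieRing L] [LieAlgebra ℂ L] {b : Basis (Fin 52) ℂ L}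
  [FiniteDimensional ℂ L] {h e f : L}

omit [FiniteDimensional ℂ L] in
lemma lie_weight (hb : IsModel b) (hh : h = toral b fun i => (neutralCoweight i : ℂ))
    (k : Fin 52) : ⁅h, b k⁆ = (weightAt neutralCoweight k : ℂ) • b k :=
  hh ▸ hb.lie_toral_int _ k

omit [FiniteDimensional ℂ L] in
lemma lie_top (hb : IsModel b) (hh : h = toral b fun i => (neutralCoweight i : ℂ)) (s t : ℂ) :
    ⁅h, s • b 22 + t • b 23⁆ = (6 : ℂ) • (s • b 22 + t • b 23) := by
  rw [lie_add, lie_smul, lie_smul, lie_weight hb hh, lie_weight hb hh, weightAt_top.1,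
    weightAt_top.2]
  push_cast
  module

omit [FiniteDimensional ℂ L] in
lemma coeff_eq_zero (he : e = combination b nilpotentComb) {r s t : ℂ}
    (h0 : r • e + s • b 22 + t • b 23 = 0) : r = 0 ∧ s = 0 ∧ t = 0 := by
  have h1 := Fintype.linearIndependent_iff.1 (linearIndependent_center he) ![r, s, t]
    (by simpa [Fin.sum_univ_three] using h0)
  exact ⟨h1 0, h1 1, h1 2⟩

lemma zCenter_eq_span (hb : IsModel b) (he : e = combination b nilpotentComb)
    (hdim : finrank ℂ (LinearMap.ker (ad ℂ L e)) = 12) :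
    zCenter L e = Submodule.span ℂ (Set.range ![e, b 22, b 23]) := by
  ext z
  rw [Submodule.mem_span_range_iff_exists_fun]
  refine (inCenterOfCentralizer_iff hb he hdim z).trans ⟨?_, ?_⟩
  · rintro ⟨r, s, t, rfl⟩
    exact ⟨![r, s, t], by simp [Fin.sum_univ_three]⟩
  · rintro ⟨c, rfl⟩
    exact ⟨c 0, c 1, c 2, by simp [Fin.sum_univ_three]⟩

lemma eigenvalue_cases (hb : IsModel b) (he : e = combination b nilpotentComb)
    (hdim : finrank ℂ (LinearMap.ker (ad ℂ L e)) = 12)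
    (hh : h = toral b fun i => (neutralCoweight i : ℂ)) (ht : IsSl2Triple h e f) {m : ℂ} {z : L}
    (hz : InCenterOfCentralizer L e z) (hm : ⁅h, z⁆ = m • z) :
    ∃ r s t : ℂ, z = r • e + s • b 22 + t • b 23 ∧ (2 - m) * r = 0 ∧ (6 - m) * s = 0 ∧
      (6 - m) * t = 0 := by
  obtain ⟨r, s, t, rfl⟩ := (inCenterOfCentralizer_iff hb he hdim z).1 hz
  refine ⟨r, s, t, rfl, coeff_eq_zero he ?_⟩
  have h2 := ht.lie_h_e_smul ℂ
  rw [add_assoc, lie_add, lie_top hb hh, lie_smul, h2] at hm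
  rw [← sub_eq_zero] at hm
  rw [← hm]
  module

lemma mem_zCenter_inf_eigenspace_iff (hb : IsModel b) (he : e = combination b nilpotentComb)
    (hdim : finrank ℂ (LinearMap.ker (ad ℂ L e)) = 12)
    (hh : h = toral b fun i => (neutralCoweight i : ℂ)) (ht : IsSl2Triple h e f) (z : L) :
    InCenterOfCentralizer L e z ∧ ⁅h, z⁆ = (6 : ℂ) • z ↔ ∃ s t : ℂ, z = s • b 22 + t • b 23 := by
  constructor
  · rintro ⟨hz, hm⟩
    obtain ⟨r, s, t, rfl, hr, -, -⟩ := eigenvalue_cases hb he hdim hh ht hz hm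
    obtain rfl : r = 0 := (mul_eq_zero.1 hr).resolve_left (by norm_num)
    exact ⟨s, t, by simp⟩
  · rintro ⟨s, t, rfl⟩
    exact ⟨(inCenterOfCentralizer_iff hb he hdim _).2 ⟨0, s, t, by simp⟩, lie_top hb hh s t⟩

lemma eigenvalue_iff (hb : IsModel b) (he : e = combination b nilpotentComb)
    (hdim : finrank ℂ (LinearMap.ker (ad ℂ L e)) = 12)
    (hh : h = toral b fun i => (neutralCoweight i : ℂ)) (ht : IsSl2Triple h e f) (m : ℂ) :
    (∃ z : L, z ≠ 0 ∧ InCenterOfCentralizer L e z ∧ ⁅h, z⁆ = m • z) ↔ m ∈ ({2, 6} : Set ℂ) := by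
  constructor
  · rintro ⟨z, hz0, hz, hm⟩
    obtain ⟨r, s, t, rfl, hr, hs, ht⟩ := eigenvalue_cases hb he hdim hh ht hz hm
    by_contra! hm'
    simp only [Set.mem_insert_iff, Set.mem_singleton_iff, not_or] at hm'
    have h2 : 2 - m ≠ 0 := sub_ne_zero.2 (Ne.symm hm'.1)
    have h6 : 6 - m ≠ 0 := sub_ne_zero.2 (Ne.symm hm'.2)
    simp_all
  · rintro (rfl | rfl)
    · refine ⟨e, ht.e_ne_zero, (inCenterOfCentralizer_iff hb he hdim e).2 ⟨1, 0, 0, by simp⟩,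
        ht.lie_h_e_smul ℂ⟩
    · exact ⟨b 22, b.ne_zero 22,
        (mem_zCenter_inf_eigenspace_iff hb he hdim hh ht _).2 ⟨1, 0, by simp⟩⟩

lemma zCenter_inf_eigenspace (hb : IsModel b) (he : e = combination b nilpotentComb)
    (hdim : finrank ℂ (LinearMap.ker (ad ℂ L e)) = 12)
    (hh : h = toral b fun i => (neutralCoweight i : ℂ)) (ht : IsSl2Triple h e f) :
    zCenter L e ⊓ Module.End.eigenspace (ad ℂ L h) (6 : ℂ) =
      Submodule.span ℂ (Set.range ![b 22, b 23]) := by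
  ext z
  rw [Submodule.mem_span_range_iff_exists_fun, Submodule.mem_inf, Module.End.mem_eigenspace_iff]
  refine (mem_zCenter_inf_eigenspace_iff hb he hdim hh ht z).trans ⟨?_, ?_⟩
  · rintro ⟨s, t, rfl⟩
    exact ⟨![s, t], by simp⟩
  · rintro ⟨c, rfl⟩
    exact ⟨c 0, c 1, by simp⟩

lemma lie_f_lie_e [IsKilling ℂ L] (hb : IsModel b)
    (hh : h = toral b fun i => (neutralCoweight i : ℂ)) (ht : IsSl2Triple h e f)
    (hs : IsNeutral h e) {k : L} (hk : ⁅h, k⁆ = 0) (hek : ⁅e, ⁅e, k⁆⁆ = 0) :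
    ⁅f, ⁅e, k⁆⁆ = (2 : ℂ) • k := by
  have h2 := ht.lie_h_e_smul ℂ
  have hf : ⁅h, f⁆ = (-2 : ℂ) • f := by rw [ht.lie_lie_smul_f ℂ, neg_smul]
  refine sub_eq_zero.1 (hs.eq_zero_of_card_eq (lie_weight hb hh) (c := 2) (by norm_num)
    card_levelTwo ?_ ?_)
  · rw [mem_adEig, lie_sub, lie_smul, hk, leibniz_lie h f, leibniz_lie h e, hk, h2, hf]
    simp
  · rw [lie_sub, leibniz_lie, ht.lie_e_f, hek, leibniz_lie h e, hk, h2]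
    simp

lemma exists_lie_f_eq_levelZero [IsKilling ℂ L] (hb : IsModel b)
    (he : e = combination b nilpotentComb) (hh : h = toral b fun i => (neutralCoweight i : ℂ))
    (ht : IsSl2Triple h e f) (hs : IsNeutral h e) (i : Fin 3) :
    ∃ x : L, ⁅x, e⁆ = 0 ∧ ⁅f, x⁆ = combination b (levelZeroComb i) := by
  have h1 : ⁅⁅e, combination b (levelZeroComb i)⁆, e⁆ = 0 := by
    rw [he, hb _ _ _ (lieCheck_levelZeroComb i), hb _ _ _ (lieCheck_centralizerComb _),
      combination_nil]
  have h2 : ⁅h, combination b (levelZeroComb i)⁆ = 0 := by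
    have := mem_adEig.1 (combination_mem_adEig (lie_weight hb hh) (weightAt_levelZeroComb i))
    simpa using this
  refine ⟨(2⁻¹ : ℂ) • ⁅e, combination b (levelZeroComb i)⁆, by rw [smul_lie, h1, smul_zero], ?_⟩
  rw [lie_smul, lie_f_lie_e hb hh ht hs h2 (lie_eq_zero_symm h1), smul_smul]
  norm_num

omit [FiniteDimensional ℂ L] in
lemma lie_levelZero_top (hb : IsModel b) (β γ : ℂ) :
    ⁅combination b (levelZeroComb 0), β • b 22 + γ • b 23⁆ = (β - 2 * γ) • b 23 ∧
    ⁅combination b (levelZeroComb 1), β • b 22 + γ • b 23⁆ = (2 * β - γ) • b 22 ∧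
    ⁅combination b (levelZeroComb 2), β • b 22 + γ • b 23⁆ =
      (-3 : ℂ) • (β • b 22 + γ • b 23) := by
  have h1 (i : Fin 3) := hb _ _ _ (lieCheck_levelZeroComb_top i).1
  have h2 (i : Fin 3) := hb _ _ _ (lieCheck_levelZeroComb_top i).2
  simp only [combination_cons, combination_nil, Int.cast_one, one_smul, add_zero] at h1 h2
  refine ⟨?_, ?_, ?_⟩ <;> rw [lie_add, lie_smul, lie_smul, h1, h2] <;>
    simp [combination_cons, combination_nil] <;> module

lemma exists_coeff {β γ : ℂ} (h0 : ¬ (β = 0 ∧ γ = 0)) (s t : ℂ) :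
    ∃ c₀ c₁ c₂ : ℂ, c₁ * (2 * β - γ) - 3 * c₂ * β = s ∧ c₀ * (β - 2 * γ) - 3 * c₂ * γ = t := by
  by_cases h1 : β - 2 * γ = 0
  · obtain rfl : β = 2 * γ := sub_eq_zero.1 h1
    have hγ : γ ≠ 0 := by rintro rfl; simp at h0
    exact ⟨0, (s - 2 * t) / (3 * γ), -t / (3 * γ), by field_simp; ring, by field_simp; ring⟩
  by_cases h2 : 2 * β - γ = 0
  · obtain rfl : 2 * β = γ := sub_eq_zero.1 h2
    have hβ : β ≠ 0 := by rintro rfl; simp at h0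
    exact ⟨(t - 2 * s) / (-3 * β), 0, -s / (3 * β), by field_simp; ring, by field_simp; ring⟩
  · exact ⟨t / (β - 2 * γ), s / (2 * β - γ), 0, by field_simp; ring, by field_simp; ring⟩

lemma propertyP [IsKilling ℂ L] (hb : IsModel b) (he : e = combination b nilpotentComb)
    (hdim : finrank ℂ (LinearMap.ker (ad ℂ L e)) = 12)
    (hh : h = toral b fun i => (neutralCoweight i : ℂ)) (ht : IsSl2Triple h e f)
    (hs : IsNeutral h e) : PropertyP L e h f := by
  intro m hm hmax v hv hv0 z hz hmz
  obtain rfl : m = 6 := by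
    rcases (eigenvalue_iff hb he hdim hh ht m).1 hm with rfl | rfl
    · have := (Complex.le_def.1
        (hmax 6 ((eigenvalue_iff hb he hdim hh ht 6).2 (Set.mem_insert_of_mem _ rfl)))).1
      norm_num at this
    · rfl
  obtain ⟨s, t, rfl⟩ := (mem_zCenter_inf_eigenspace_iff hb he hdim hh ht z).1 ⟨hz, hmz⟩
  obtain ⟨r, β, γ, rfl⟩ := (inCenterOfCentralizer_iff hb he hdim v).1 hv
  by_cases hr : r = 0
  · obtain ⟨c₀, c₁, c₂, h1, h2⟩ := exists_coeff (β := β) (γ := γ)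
      (by rintro ⟨rfl, rfl⟩; simp [hr] at hv0) s t
    choose x hx hfx using exists_lie_f_eq_levelZero hb he hh ht hs
    obtain ⟨h3, h4, h5⟩ := lie_levelZero_top hb β γ
    refine ⟨c₀ • x 0 + c₁ • x 1 + c₂ • x 2, by simp [hx], ?_⟩
    rw [hr, zero_smul, zero_add, lie_add f, lie_add f, lie_smul, lie_smul, lie_smul, hfx, hfx, hfx,
      add_lie, add_lie, smul_lie, smul_lie, smul_lie, h3, h4, h5, ← h1, ← h2]
    module
  · have hf : ⁅h, f⁆ = (-2 : ℂ) • f := by rw [ht.lie_lie_smul_f ℂ, neg_smul]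
    have h10 : ⁅⁅f, s • b 22 + t • b 23⁆, β • b 22 + γ • b 23⁆ = 0 := by
      have hfz : ⁅f, s • b 22 + t • b 23⁆ ∈ adEig h 4 :=
        lie_mem_adEig (mem_adEig.2 hf) (mem_adEig.2 hmz) (by norm_num)
      have h1 : ⁅⁅f, s • b 22 + t • b 23⁆, β • b 22 + γ • b 23⁆ ∈ adEig h ((10 : ℤ) : ℂ) :=
        lie_mem_adEig hfz (mem_adEig.2 (lie_top hb hh β γ)) (by norm_num)
      rw [eq_sum_of_mem_adEig (lie_weight hb hh) h1,
        Finset.filter_eq_empty_iff.2 fun k _ => weightAt_ne_ten k, Finset.sum_empty]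
    have h1 : ⁅⁅f, s • b 22 + t • b 23⁆, e⁆ = (-6 : ℂ) • (s • b 22 + t • b 23) := by
      rw [lie_lie, hz.1, ← lie_skew f e, ht.lie_e_f, lie_neg, lie_zero, zero_sub, neg_neg,
        ← lie_skew, hmz, neg_smul]
    refine ⟨(-(6 * r)⁻¹) • (s • b 22 + t • b 23), by rw [smul_lie, hz.1, smul_zero], ?_⟩
    rw [lie_smul, smul_lie, add_assoc, lie_add, h10, add_zero, lie_smul, h1, smul_smul, smul_smul]
    have : -(6 * r)⁻¹ * r * -6 = 1 := by field_simp
    rw [this, one_smul]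

end F4Model
end

/-- For the distinguished nilpotent orbit of `F₄` with `dim 𝔤^e = 12`:
`dim 𝔷(𝔤^e) = 3`, the eigenvalues of `ad h` on `𝔷(𝔤^e)` are `2` and `6` with the
eigenvalue `6` of multiplicity `2`, and `e` satisfies property (P). -/
theorem f4_orbit_propertyP
    (L : Type*) [LieRing L] [LieAlgebra ℂ L] [FiniteDimensional ℂ L]
    [LieAlgebra.IsSimple ℂ L] (htype : Nonempty (L ≃ₗ⁅ℂ⁆ LieAlgebra.f₄ ℂ))
    (e h f : L) (ht : IsSl2Triple h e f) (he : IsNilpotent (LieAlgebra.ad ℂ L e))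
    (hdist : IsDistinguished L e)
    (hdim : Module.finrank ℂ ↥(centralizer L e) = 12) :
    Module.finrank ℂ ↥(zCenter L e) = 3 ∧
    (∀ m : ℂ, (∃ z : L, z ≠ 0 ∧ InCenterOfCentralizer L e z ∧ ⁅h, z⁆ = m • z) ↔
      m ∈ ({2, 6} : Set ℂ)) ∧
    Module.finrank ℂ
      ↥(zCenter L e ⊓ Module.End.eigenspace (LieAlgebra.ad ℂ L h) (6 : ℂ)) = 2 ∧
    PropertyP L e h f := by
  have hker : (centralizer L e).toSubmodule = LinearMap.ker (LieAlgebra.ad ℂ L e) := by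
    ext x
    exact ⟨F4Model.lie_eq_zero_symm, F4Model.lie_eq_zero_symm⟩
  have hdim' : Module.finrank ℂ (LinearMap.ker (LieAlgebra.ad ℂ L e)) = 12 := hker ▸ hdim
  obtain ⟨b₀, hb₀⟩ := F4Model.exists_isModel_basis htype.some
  obtain ⟨b, hb, hh, he', hs⟩ := F4Model.exists_normal_form hb₀ ht he hdim'
  have hli := F4Model.linearIndependent_center he'
  refine ⟨?_, F4Model.eigenvalue_iff hb he' hdim' hh ht, ?_,
    F4Model.propertyP hb he' hdim' hh ht hs⟩
  · rw [F4Model.zCenter_eq_span hb he' hdim', finrank_span_eq_card hli, Fintype.card_fin]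
  · rw [F4Model.zCenter_inf_eigenspace hb he' hdim' hh ht,
      finrank_span_eq_card (b := ![b 22, b 23]) (hli.comp Fin.succ (Fin.succ_injective _)),
      Fintype.card_fin]
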